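/- arXiv:2209.14726 — 9 statements merged into one kernel-verified Lean document; each statement's English description precedes it below -/
import Mathlib

section
/- Let f be a continuous probability density on ℝ with ∫_ℝ e^x f(x) dx = 1, and let σ : (0,∞) → (0,∞) be twice differentiable with C(K) = C_BS(K, σ(K)) for all K > 0 and σ'(1) = 0. Then σ''(1) = √(2π)·e^{σ(1)²/8}·( f(0) − (2π)^{-1/2} σ(1)^{-1} e^{-σ(1)²/8} ). In particular, if f(0) < (2π)^{-1/2} σ(1)^{-1} e^{-σ(1)²/8}, then σ''(1) < 0 and, since σ'(1) = 0, the function σ has a strict local maximum at K = 1. -/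
open MeasureTheory Filter

/-- Standard normal cumulative distribution function. -/
noncomputable def stdNormalCDF (x : ℝ) : ℝ :=
  (Real.sqrt (2 * Real.pi))⁻¹ * ∫ t in Set.Iic x, Real.exp (-t ^ 2 / 2)

/-- Black–Scholes call price with `S₀ = 1` and total volatility `σ`. -/
noncomputable def callBS (K σ : ℝ) : ℝ :=
  stdNormalCDF (-Real.log K / σ + σ / 2) - K * stdNormalCDF (-Real.log K / σ - σ / 2)

/-- Call price associated to a log-price density `f` (with `S₀ = 1`). -/
noncomputable def callPrice (f : ℝ → ℝ) (K : ℝ) : ℝ :=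
  ∫ x in Set.Ioi (Real.log K), (Real.exp x - K) * f x

/-!
Differentiating the call price twice recovers the density, `C''(K) = f (log K) / K`
(Breeden–Litzenberger). Differentiating the Black–Scholes price along the smile twice, with
`φ(d₁) = K φ(d₂)`, gives
`C''(K) = φ(d₁) (σ'' + 2 d₁ σ' / (K σ) + d₁ d₂ σ'² / σ + 1 / (K² σ))`.
At `K = 1`, where `d₁ = σ / 2 = -d₂` and `σ' = 0`, equating the two yields
`f 0 = φ(σ / 2) (σ'' + 1 / σ)`.
-/

open Real Set ProbabilityTheory
open scoped Topology NNReal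

section TailIntegrals

variable {E : Type*} [NormedAddCommGroup E] [NormedSpace ℝ E] [CompleteSpace E] {g : ℝ → E} {y : ℝ}

theorem hasDerivAt_integral_Iic (hg : Integrable g) (hgy : ContinuousAt g y) :
    HasDerivAt (fun u ↦ ∫ x in Iic u, g x) (g y) y := by
  have hsplit (u : ℝ) : ∫ x in Iic u, g x = (∫ x in Iic y, g x) + ∫ x in y..u, g x := by
    rw [← intervalIntegral.integral_Iic_sub_Iic hg.integrableOn hg.integrableOn, add_sub_cancel]
  rw [funext hsplit]
  exact (intervalIntegral.integral_hasDerivAt_right hg.intervalIntegrable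
    hg.aestronglyMeasurable.stronglyMeasurableAtFilter hgy).const_add _

theorem hasDerivAt_integral_Ioi (hg : Integrable g) (hgy : ContinuousAt g y) :
    HasDerivAt (fun u ↦ ∫ x in Ioi u, g x) (-g y) y := by
  have hsplit (u : ℝ) : ∫ x in Ioi u, g x = (∫ x in u..y, g x) + ∫ x in Ioi y, g x :=
    (intervalIntegral.integral_interval_add_Ioi hg.integrableOn hg.integrableOn).symm
  rw [funext hsplit]
  exact (intervalIntegral.integral_hasDerivAt_left hg.intervalIntegrable
    hg.aestronglyMeasurable.stronglyMeasurableAtFilter hgy).add_const _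

end TailIntegrals

section Gaussian

theorem hasDerivAt_gaussianPDFReal (μ : ℝ) (v : ℝ≥0) (x : ℝ) :
    HasDerivAt (gaussianPDFReal μ v) (-(x - μ) / v * gaussianPDFReal μ v x) x := by
  have hexponent : HasDerivAt (fun y ↦ -(y - μ) ^ 2 / (2 * v)) (-(x - μ) / v) x :=
    ((((hasDerivAt_id x).sub_const μ).pow 2).neg.div_const (2 * v)).congr_deriv <| by
      simp only [id]
      ring
  refine (hexponent.exp.const_mul (√(2 * π * v))⁻¹).congr_deriv ?_
  rw [gaussianPDFReal]
  ring

theorem gaussianPDFReal_zero_one (x : ℝ) :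
    gaussianPDFReal 0 1 x = (√(2 * π))⁻¹ * exp (-x ^ 2 / 2) := by
  simp [gaussianPDFReal]

theorem hasDerivAt_stdNormalCDF (x : ℝ) :
    HasDerivAt stdNormalCDF (gaussianPDFReal 0 1 x) x := by
  have hcdf : stdNormalCDF = fun y ↦ ∫ t in Iic y, gaussianPDFReal 0 1 t := by
    ext y
    simp only [stdNormalCDF, gaussianPDFReal_zero_one, integral_const_mul]
  rw [hcdf]
  exact hasDerivAt_integral_Iic (integrable_gaussianPDFReal 0 1)
    (hasDerivAt_gaussianPDFReal 0 1 x).continuousAt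

end Gaussian

section CallPrice

variable {f : ℝ → ℝ} {K : ℝ}

theorem indicator_Ioi_log_eq_max (hK : 0 < K) (x : ℝ) :
    (Ioi (log K)).indicator (fun x ↦ (exp x - K) * f x) x = max (exp x - K) 0 * f x := by
  by_cases hx : log K < x
  · have : K < exp x := (log_lt_iff_lt_exp hK).1 hx
    rw [indicator_of_mem (mem_Ioi.2 hx), max_eq_left (by linarith)]
  · have : exp x ≤ K := (le_log_iff_exp_le hK).1 (not_lt.1 hx)
    rw [indicator_of_notMem (notMem_Ioi.2 (not_lt.1 hx)), max_eq_right (by linarith), zero_mul]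

theorem callPrice_eq_integral_max (f : ℝ → ℝ) (hK : 0 < K) :
    callPrice f K = ∫ x, max (exp x - K) 0 * f x := by
  rw [callPrice, ← integral_indicator measurableSet_Ioi]
  exact integral_congr_ae (.of_forall (indicator_Ioi_log_eq_max hK))

theorem integrable_max_exp_sub_mul (hf : Integrable f) (hexp : Integrable fun x ↦ exp x * f x)
    (hK : 0 < K) : Integrable fun x ↦ max (exp x - K) 0 * f x := by
  have hlin : Integrable fun x ↦ (exp x - K) * f x := by
    simpa only [sub_mul] using! hexp.sub (hf.const_mul K)
  exact (hlin.indicator measurableSet_Ioi).congr (.of_forall (indicator_Ioi_log_eq_max hK))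

theorem hasDerivAt_max_exp_sub_mul (hK : 0 < K) {x : ℝ} (hx : x ≠ log K) (c : ℝ) :
    HasDerivAt (fun L ↦ max (exp x - L) 0 * c) ((Ioi (log K)).indicator (fun _ ↦ -c) x) K := by
  rcases hx.lt_or_gt with hlt | hgt
  · have hexp : exp x < K := (lt_log_iff_exp_lt hK).1 hlt
    rw [indicator_of_notMem (notMem_Ioi.2 hlt.le)]
    refine (hasDerivAt_const K (0 : ℝ)).congr_of_eventuallyEq ?_
    filter_upwards [lt_mem_nhds hexp] with L hL
    rw [max_eq_right (by linarith), zero_mul]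
  · have hexp : K < exp x := (log_lt_iff_lt_exp hK).1 hgt
    rw [indicator_of_mem (mem_Ioi.2 hgt), ← neg_one_mul]
    refine (((hasDerivAt_id K).const_sub (exp x)).mul_const c).congr_of_eventuallyEq ?_
    filter_upwards [gt_mem_nhds hexp] with L hL
    rw [max_eq_left (by linarith), id]

theorem hasDerivAt_callPrice (hf : Integrable f) (hexp : Integrable fun x ↦ exp x * f x)
    (hK : 0 < K) : HasDerivAt (callPrice f) (-∫ x in Ioi (log K), f x) K := by
  have hpos : ∀ᶠ L in 𝓝 K, 0 < L := lt_mem_nhds hK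
  have hlip (x : ℝ) :
      LipschitzOnWith (nnabs |f x|) (fun L ↦ max (exp x - L) 0 * f x) univ := by
    refine .of_dist_le_mul fun L _ M _ ↦ ?_
    have hmax := abs_max_sub_max_le_abs (exp x - L) (exp x - M) 0
    rw [sub_sub_sub_cancel_left, abs_sub_comm M] at hmax
    rw [coe_nnabs, abs_abs, Real.dist_eq, Real.dist_eq, ← sub_mul, abs_mul, mul_comm]
    exact mul_le_mul_of_nonneg_left hmax (abs_nonneg _)
  have hderiv : HasDerivAt (fun L ↦ ∫ x, max (exp x - L) 0 * f x)
      (∫ x, (Ioi (log K)).indicator (fun x ↦ -f x) x) K :=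
    (hasDerivAt_integral_of_dominated_loc_of_lip univ_mem
      (hpos.mono fun L hL ↦ (integrable_max_exp_sub_mul hf hexp hL).aestronglyMeasurable)
      (integrable_max_exp_sub_mul hf hexp hK)
      (hf.neg.indicator measurableSet_Ioi).aestronglyMeasurable
      (.of_forall hlip) hf.abs
      ((volume.ae_ne (log K)).mono fun x hx ↦ hasDerivAt_max_exp_sub_mul hK hx (f x))).2
  rw [integral_indicator measurableSet_Ioi, integral_neg] at hderiv
  exact hderiv.congr_of_eventuallyEq (hpos.mono fun L hL ↦ callPrice_eq_integral_max f hL)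

theorem hasDerivAt_deriv_callPrice (hf : Integrable f) (hexp : Integrable fun x ↦ exp x * f x)
    (hK : 0 < K) (hfK : ContinuousAt f (log K)) :
    HasDerivAt (deriv (callPrice f)) (f (log K) / K) K := by
  have htail : HasDerivAt (fun L ↦ -∫ x in Ioi (log L), f x) (f (log K) / K) K :=
    (((hasDerivAt_integral_Ioi hf hfK).comp K (hasDerivAt_log hK.ne')).neg).congr_deriv <| by
      rw [neg_mul, neg_neg, div_eq_mul_inv]
  refine htail.congr_of_eventuallyEq ?_
  filter_upwards [lt_mem_nhds hK] with L hL
  exact (hasDerivAt_callPrice hf hexp hL).deriv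

end CallPrice

section BlackScholes

/-- The Black–Scholes `d₁`, the first argument of `Φ` in `callBS`; `s` is the total volatility, so
no maturity appears. -/
noncomputable def bsD₁ (K s : ℝ) : ℝ := -log K / s + s / 2

/-- The Black–Scholes `d₂ = d₁ - s`, the second argument of `Φ` in `callBS`; `s` is the total
volatility. -/
noncomputable def bsD₂ (K s : ℝ) : ℝ := -log K / s - s / 2

theorem gaussianPDFReal_bsD₁ {K s : ℝ} (hK : 0 < K) (hs : s ≠ 0) :
    gaussianPDFReal 0 1 (bsD₁ K s) = K * gaussianPDFReal 0 1 (bsD₂ K s) := by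
  have hsq : -bsD₁ K s ^ 2 / 2 = log K + -bsD₂ K s ^ 2 / 2 := by
    rw [bsD₁, bsD₂]
    field_simp
    ring
  rw [gaussianPDFReal_zero_one, gaussianPDFReal_zero_one, hsq, exp_add, exp_log hK]
  ring

variable {σ : ℝ → ℝ} {K σ' : ℝ}

theorem hasDerivAt_bsD₁ (hK : K ≠ 0) (hσK : σ K ≠ 0) (hσ : HasDerivAt σ σ' K) :
    HasDerivAt (fun L ↦ bsD₁ L (σ L)) (-(1 / (K * σ K)) - bsD₂ K (σ K) * σ' / σ K) K := by
  refine (((hasDerivAt_log hK).neg.div hσ hσK).add (hσ.div_const 2)).congr_deriv ?_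
  simp only [bsD₂, Pi.neg_apply]
  field_simp
  ring

theorem hasDerivAt_bsD₂ (hK : K ≠ 0) (hσK : σ K ≠ 0) (hσ : HasDerivAt σ σ' K) :
    HasDerivAt (fun L ↦ bsD₂ L (σ L)) (-(1 / (K * σ K)) - bsD₁ K (σ K) * σ' / σ K) K := by
  refine (((hasDerivAt_log hK).neg.div hσ hσK).sub (hσ.div_const 2)).congr_deriv ?_
  simp only [bsD₁, Pi.neg_apply]
  field_simp
  ring

theorem hasDerivAt_callBS_smile (hK : 0 < K) (hσK : σ K ≠ 0) (hσ : HasDerivAt σ σ' K) :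
    HasDerivAt (fun L ↦ callBS L (σ L))
      (gaussianPDFReal 0 1 (bsD₁ K (σ K)) * σ' - stdNormalCDF (bsD₂ K (σ K))) K := by
  have hΦ₁ := (hasDerivAt_stdNormalCDF _).comp K (hasDerivAt_bsD₁ hK.ne' hσK hσ)
  have hΦ₂ := (hasDerivAt_stdNormalCDF _).comp K (hasDerivAt_bsD₂ hK.ne' hσK hσ)
  refine (hΦ₁.sub ((hasDerivAt_id K).mul hΦ₂)).congr_deriv ?_
  have hsub : bsD₁ K (σ K) - bsD₂ K (σ K) = σ K := by
    rw [bsD₁, bsD₂]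
    ring
  simp only [id, Function.comp_apply, gaussianPDFReal_bsD₁ hK hσK]
  field_simp
  linear_combination K * gaussianPDFReal 0 1 (bsD₂ K (σ K)) * σ' * hsub

theorem hasDerivAt_deriv_callBS_smile {σ'' : ℝ} (hK : 0 < K) (hσK : σ K ≠ 0)
    (hσ : ∀ᶠ L in 𝓝 K, DifferentiableAt ℝ σ L) (hσ' : HasDerivAt (deriv σ) σ'' K) :
    HasDerivAt (deriv fun L ↦ callBS L (σ L))
      (gaussianPDFReal 0 1 (bsD₁ K (σ K)) *
        (σ'' + 2 * bsD₁ K (σ K) * deriv σ K / (K * σ K) +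
          bsD₁ K (σ K) * bsD₂ K (σ K) * deriv σ K ^ 2 / σ K + 1 / (K ^ 2 * σ K))) K := by
  have hσd := hσ.self_of_nhds.hasDerivAt
  have hφ₁ := (hasDerivAt_gaussianPDFReal 0 1 _).comp K (hasDerivAt_bsD₁ hK.ne' hσK hσd)
  have hΦ₂ := (hasDerivAt_stdNormalCDF _).comp K (hasDerivAt_bsD₂ hK.ne' hσK hσd)
  have hfirst : (deriv fun L ↦ callBS L (σ L)) =ᶠ[𝓝 K] fun L ↦
      gaussianPDFReal 0 1 (bsD₁ L (σ L)) * deriv σ L - stdNormalCDF (bsD₂ L (σ L)) := by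
    filter_upwards [lt_mem_nhds hK, hσ, hσd.continuousAt.eventually_ne hσK] with L hL hσL hL₀
    exact (hasDerivAt_callBS_smile hL hL₀ hσL.hasDerivAt).deriv
  refine (((hφ₁.mul hσ').sub hΦ₂).congr_of_eventuallyEq hfirst).congr_deriv ?_
  simp only [Function.comp_apply, gaussianPDFReal_bsD₁ hK hσK, sub_zero, NNReal.coe_one, div_one]
  field_simp
  ring

theorem density_eq_of_callPrice_eq_callBS {f : ℝ → ℝ} (hf : Integrable f)
    (hexp : Integrable fun x ↦ exp x * f x) (hK : 0 < K) (hfK : ContinuousAt f (log K))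
    (hσK : σ K ≠ 0) (hσ : ∀ᶠ L in 𝓝 K, DifferentiableAt ℝ σ L)
    (hσ' : DifferentiableAt ℝ (deriv σ) K)
    (hIV : callPrice f =ᶠ[𝓝 K] fun L ↦ callBS L (σ L)) :
    f (log K) / K = gaussianPDFReal 0 1 (bsD₁ K (σ K)) *
      (deriv (deriv σ) K + 2 * bsD₁ K (σ K) * deriv σ K / (K * σ K) +
        bsD₁ K (σ K) * bsD₂ K (σ K) * deriv σ K ^ 2 / σ K + 1 / (K ^ 2 * σ K)) :=
  (hasDerivAt_deriv_callPrice hf hexp hK hfK).unique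
    ((hasDerivAt_deriv_callBS_smile hK hσK hσ hσ'.hasDerivAt).congr_of_eventuallyEq hIV.deriv)

end BlackScholes

section StrictLocalMax

variable {g : ℝ → ℝ} {a : ℝ}

theorem eventually_lt_of_deriv_pos_left (hg : ContinuousAt g a)
    (hderiv : ∀ᶠ x in 𝓝[<] a, 0 < deriv g x) : ∀ᶠ x in 𝓝[<] a, g x < g a := by
  obtain ⟨b, hba, hb⟩ := (nhdsLT_basis a).eventually_iff.1 hderiv
  have hcont : ContinuousOn g (Ioc b a) := by
    intro x hx
    rcases hx.2.eq_or_lt with rfl | hxa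
    · exact hg.continuousWithinAt
    · exact (differentiableAt_of_deriv_ne_zero
        (hb ⟨hx.1, hxa⟩).ne').continuousAt.continuousWithinAt
  have hmono : StrictMonoOn g (Ioc b a) :=
    strictMonoOn_of_deriv_pos (convex_Ioc b a) hcont fun x hx ↦ hb (by rwa [interior_Ioc] at hx)
  filter_upwards [Ioo_mem_nhdsLT hba] with x hx
  exact hmono ⟨hx.1, hx.2.le⟩ (right_mem_Ioc.2 hba) hx.2

theorem eventually_lt_of_deriv_neg_right (hg : ContinuousAt g a)
    (hderiv : ∀ᶠ x in 𝓝[>] a, deriv g x < 0) : ∀ᶠ x in 𝓝[>] a, g x < g a := by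
  obtain ⟨b, hab, hb⟩ := (nhdsGT_basis a).eventually_iff.1 hderiv
  have hcont : ContinuousOn g (Ico a b) := by
    intro x hx
    rcases hx.1.eq_or_lt with rfl | hax
    · exact hg.continuousWithinAt
    · exact (differentiableAt_of_deriv_ne_zero
        (hb ⟨hax, hx.2⟩).ne).continuousAt.continuousWithinAt
  have hanti : StrictAntiOn g (Ico a b) :=
    strictAntiOn_of_deriv_neg (convex_Ico a b) hcont fun x hx ↦ hb (by rwa [interior_Ico] at hx)
  filter_upwards [Ioo_mem_nhdsGT hab] with x hx
  exact hanti (left_mem_Ico.2 hab) ⟨hx.1.le, hx.2⟩ hx.1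

theorem eventually_lt_of_deriv_deriv_neg (hg : ContinuousAt g a) (hderiv : deriv g a = 0)
    (hderiv₂ : deriv (deriv g) a < 0) : ∀ᶠ x in 𝓝[≠] a, g x < g a := by
  have hsign : ∀ᶠ x in 𝓝[≠] a, SignType.sign (deriv g x) = SignType.sign (a - x) :=
    (eventually_nhdsWithin_sign_eq_of_deriv_neg hderiv₂ hderiv).filter_mono nhdsWithin_le_nhds
  rw [← nhdsLT_sup_nhdsGT, eventually_sup]
  exact ⟨eventually_lt_of_deriv_pos_left hg (deriv_pos_left_of_sign_deriv hsign),
    eventually_lt_of_deriv_neg_right hg (deriv_neg_right_of_sign_deriv hsign)⟩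

end StrictLocalMax

theorem atm_second_derivative_formula_general {f σ : ℝ → ℝ}
    (hf_cont : ContinuousAt f 0) (hf_int : Integrable f)
    (hf_rn : Integrable (fun x ↦ exp x * f x))
    (hσ_pos : 0 < σ 1) (hσ_diff : ∀ᶠ K in 𝓝 1, DifferentiableAt ℝ σ K)
    (hσ_diff2 : DifferentiableAt ℝ (deriv σ) 1)
    (hIV : ∀ᶠ K in 𝓝 1, callPrice f K = callBS K (σ K))
    (hσ'1 : deriv σ 1 = 0) :
    deriv (deriv σ) 1 = √(2 * π) * exp (σ 1 ^ 2 / 8) *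
        (f 0 - (√(2 * π) * σ 1)⁻¹ * exp (-σ 1 ^ 2 / 8)) ∧
    (f 0 < (√(2 * π) * σ 1)⁻¹ * exp (-σ 1 ^ 2 / 8) →
      deriv (deriv σ) 1 < 0 ∧ ∃ ε > (0 : ℝ), ∀ K : ℝ, K ≠ 1 → |K - 1| < ε → σ K < σ 1) := by
  have hφ : gaussianPDFReal 0 1 (bsD₁ 1 (σ 1)) = (√(2 * π))⁻¹ * exp (-σ 1 ^ 2 / 8) := by
    rw [gaussianPDFReal_zero_one, bsD₁, log_one]
    ring_nf
  have hdensity : f 0 = (√(2 * π))⁻¹ * exp (-σ 1 ^ 2 / 8) * (deriv (deriv σ) 1 + 1 / σ 1) := by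
    simpa [hσ'1, hφ] using density_eq_of_callPrice_eq_callBS hf_int hf_rn one_pos
      (by rwa [log_one]) hσ_pos.ne' hσ_diff hσ_diff2 hIV
  have hformula : deriv (deriv σ) 1 = √(2 * π) * exp (σ 1 ^ 2 / 8) *
      (f 0 - (√(2 * π) * σ 1)⁻¹ * exp (-σ 1 ^ 2 / 8)) := by
    rw [hdensity, neg_div, exp_neg]
    field_simp
    ring
  refine ⟨hformula, fun hdip ↦ ?_⟩
  have hneg : deriv (deriv σ) 1 < 0 :=
    hformula ▸ mul_neg_of_pos_of_neg (by positivity) (sub_neg.2 hdip)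
  have hmax := eventually_lt_of_deriv_deriv_neg hσ_diff.self_of_nhds.continuousAt hσ'1 hneg
  rw [eventually_nhdsWithin_iff, Metric.eventually_nhds_iff] at hmax
  exact ⟨hneg, hmax.imp fun ε hε ↦ ⟨hε.1, fun K hK hKε ↦ hε.2 hKε hK⟩⟩

/-- **ATM curvature formula.** If `σ'(1) = 0`, then
`σ''(1) = √(2π)·e^{σ(1)²/8}·(f(0) − (2π)^{-1/2}σ(1)^{-1}e^{-σ(1)²/8})`; in particular the
dip-at-zero condition implies `σ''(1) < 0` and a strict local maximum of `σ` at `K = 1`. -/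
theorem atm_second_derivative_formula
    (f : ℝ → ℝ) (σ : ℝ → ℝ)
    (hf_cont : Continuous f) (hf_nonneg : ∀ x, 0 ≤ f x)
    (hf_int : Integrable f) (hf_prob : ∫ x, f x = 1)
    (hf_rn : Integrable (fun x => Real.exp x * f x))
    (hf_mart : ∫ x, Real.exp x * f x = 1)
    (hσ_pos : ∀ K, 0 < K → 0 < σ K)
    (hσ_diff : ∀ K, 0 < K → DifferentiableAt ℝ σ K)
    (hσ_diff2 : ∀ K, 0 < K → DifferentiableAt ℝ (deriv σ) K)
    (hIV : ∀ K, 0 < K → callPrice f K = callBS K (σ K))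
    (hσ'1 : deriv σ 1 = 0) :
    deriv (deriv σ) 1 =
      Real.sqrt (2 * Real.pi) * Real.exp ((σ 1) ^ 2 / 8) *
        (f 0 - (Real.sqrt (2 * Real.pi) * σ 1)⁻¹ * Real.exp (-(σ 1) ^ 2 / 8)) ∧
    (f 0 < (Real.sqrt (2 * Real.pi) * σ 1)⁻¹ * Real.exp (-(σ 1) ^ 2 / 8) →
      deriv (deriv σ) 1 < 0 ∧
      ∃ ε > (0 : ℝ), ∀ K : ℝ, K ≠ 1 → |K - 1| < ε → σ K < σ 1) := by
  have hpos : ∀ᶠ K : ℝ in 𝓝 1, 0 < K := lt_mem_nhds one_pos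
  exact atm_second_derivative_formula_general hf_cont.continuousAt hf_int hf_rn (hσ_pos 1 one_pos)
    (hpos.mono hσ_diff) (hσ_diff2 1 one_pos) (hpos.mono hIV) hσ'1
end

section
/- Let f be an integrable probability density on ℝ satisfying the geometric symmetry condition e^{x/2} f(x) = e^{-x/2} f(-x) for all x ∈ ℝ, and define the call price C(K) = ∫_{log K}^∞ (e^x − K) f(x) dx and the put price P(K) = ∫_{-∞}^{log K} (K − e^x) f(x) dx for K > 0. Then the put–call symmetry C(K) = K · P(1/K) holds for all K > 0. -/
open MeasureTheory

/-- Put price associated to a log-price density `f` (with `S₀ = 1`). -/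
noncomputable def putPrice (f : ℝ → ℝ) (K : ℝ) : ℝ :=
  ∫ x in Set.Iio (Real.log K), (K - Real.exp x) * f x

/-- The dual of a log-price density `f`: if `X` has density `f` under `P` and `E[e^X] = 1`, this is
the density of `-X` under the share measure `dQ = e^X dP`, which takes the asset as numéraire and so
turns calls into puts. Geometric symmetry of `f` says that `f` is its own dual. -/
noncomputable def dualDensity (f : ℝ → ℝ) (x : ℝ) : ℝ :=
  Real.exp (-x) * f (-x)

theorem dualDensity_eq_self_iff {f : ℝ → ℝ} {x : ℝ} :
    dualDensity f x = f x ↔ Real.exp (x / 2) * f x = Real.exp (-x / 2) * f (-x) := by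
  have exp_mul_dualDensity :
      Real.exp (x / 2) * dualDensity f x = Real.exp (-x / 2) * f (-x) := by
    rw [dualDensity, ← mul_assoc, ← Real.exp_add]
    ring_nf
  rw [← exp_mul_dualDensity, mul_right_inj' (Real.exp_ne_zero _), eq_comm]

theorem putPrice_congr_ae {f g : ℝ → ℝ} (h : f =ᵐ[volume] g) (K : ℝ) :
    putPrice f K = putPrice g K := by
  refine integral_congr_ae (ae_restrict_of_ae ?_)
  filter_upwards [h] with x hx
  rw [hx]

theorem callPrice_eq_mul_putPrice_dualDensity (f : ℝ → ℝ) {K : ℝ} (hK : 0 < K) :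
    callPrice f K = K * putPrice (dualDensity f) (1 / K) := by
  have payoff_duality (x : ℝ) :
      (Real.exp x - K) * f x = K * ((1 / K - Real.exp (-x)) * dualDensity f (-x)) := by
    rw [dualDensity, neg_neg, Real.exp_neg]
    field_simp
  calc
    callPrice f K
      = ∫ x in Set.Ioi (Real.log K), K * ((1 / K - Real.exp (-x)) * dualDensity f (-x)) := by
        simp only [callPrice, payoff_duality]
    _ = ∫ x in Set.Iic (Real.log (1 / K)), K * ((1 / K - Real.exp x) * dualDensity f x) := by
        rw [integral_comp_neg_Ioi (Real.log K)
          (fun x => K * ((1 / K - Real.exp x) * dualDensity f x)), one_div, Real.log_inv]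
    _ = K * putPrice (dualDensity f) (1 / K) := by
        rw [integral_const_mul, integral_Iic_eq_integral_Iio, putPrice]

theorem put_call_symmetry_of_geometric_symmetry_general {f : ℝ → ℝ}
    (hsym : ∀ᵐ x, Real.exp (x / 2) * f x = Real.exp (-x / 2) * f (-x)) {K : ℝ} (hK : 0 < K) :
    callPrice f K = K * putPrice f (1 / K) := by
  have self_dual : dualDensity f =ᵐ[volume] f := hsym.mono fun _ => dualDensity_eq_self_iff.mpr
  rw [callPrice_eq_mul_putPrice_dualDensity f hK, putPrice_congr_ae self_dual]

/-- **Put–call symmetry.** Under geometric symmetry of the density,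
`C(K) = K · P(1/K)` for all `K > 0`. -/
theorem put_call_symmetry_of_geometric_symmetry
    (f : ℝ → ℝ)
    (hf_meas : Measurable f) (hf_nonneg : ∀ x, 0 ≤ f x)
    (hf_int : Integrable f) (hf_prob : ∫ x, f x = 1)
    (hsym : ∀ x : ℝ, Real.exp (x / 2) * f x = Real.exp (-x / 2) * f (-x)) :
    ∀ K : ℝ, 0 < K → callPrice f K = K * putPrice f (1 / K) :=
  fun _ hK => put_call_symmetry_of_geometric_symmetry_general (.of_forall hsym) hK
end

section
/- Let f be an integrable probability density on ℝ satisfying the geometric symmetry condition e^{x/2} f(x) = e^{-x/2} f(-x) for all x ∈ ℝ, with cumulative distribution function F(y) = ∫_{-∞}^y f(x) dx. Then for every K > 0 the call price satisfies C(K) = ∫_{log K}^∞ (e^x − K) f(x) dx = F(−log K) − K·(1 − F(log K)). -/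
/-!
Geometric symmetry amounts to `e^x f(x) = f(-x)`: weighting the density by the asset price reflects
it. The asset leg `∫_{log K}^∞ e^x f(x) dx` of the call is therefore a left tail of `f`, and
the strike leg is `K` times a right tail.
-/

open MeasureTheory

/-- Cumulative distribution function of the density `f`. -/
noncomputable def cdfOf (f : ℝ → ℝ) (y : ℝ) : ℝ :=
  ∫ x in Set.Iic y, f x

/-- A log-price density `f` is geometrically symmetric if `e^{x/2} f(x)` is an even function of `x`.
The identity is required only almost everywhere, as a density is determined only up to null sets. -/
def IsGeometricallySymmetric (f : ℝ → ℝ) : Prop :=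
  ∀ᵐ x : ℝ, Real.exp (x / 2) * f x = Real.exp (-x / 2) * f (-x)

section

variable {f : ℝ → ℝ}

namespace IsGeometricallySymmetric

theorem exp_mul_ae_eq_comp_neg (hsym : IsGeometricallySymmetric f) :
    ∀ᵐ x : ℝ, Real.exp x * f x = f (-x) := by
  filter_upwards [hsym] with x hx
  calc Real.exp x * f x
      = Real.exp (x / 2) * (Real.exp (x / 2) * f x) := by
        rw [← mul_assoc, ← Real.exp_add, add_halves]
    _ = Real.exp (x / 2) * (Real.exp (-x / 2) * f (-x)) := by rw [hx]
    _ = f (-x) := by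
        rw [← mul_assoc, ← Real.exp_add, neg_div, add_neg_cancel, Real.exp_zero, one_mul]

theorem integrable_exp_mul (hsym : IsGeometricallySymmetric f) (hf : Integrable f) :
    Integrable fun x => Real.exp x * f x :=
  (integrable_congr hsym.exp_mul_ae_eq_comp_neg).mpr hf.comp_neg

theorem setIntegral_Ioi_exp_mul (hsym : IsGeometricallySymmetric f) (k : ℝ) :
    ∫ x in Set.Ioi k, Real.exp x * f x = cdfOf f (-k) :=
  calc ∫ x in Set.Ioi k, Real.exp x * f x
      = ∫ x in Set.Ioi k, f (-x) :=
        integral_congr_ae (ae_restrict_of_ae hsym.exp_mul_ae_eq_comp_neg)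
    _ = cdfOf f (-k) := integral_comp_neg_Ioi k f

end IsGeometricallySymmetric

theorem setIntegral_Ioi_eq_integral_sub_cdfOf (hf : Integrable f) (k : ℝ) :
    ∫ x in Set.Ioi k, f x = (∫ x, f x) - cdfOf f k :=
  eq_sub_of_add_eq' (intervalIntegral.integral_Iic_add_Ioi hf.integrableOn hf.integrableOn)

/-- The trigger `e^k` and the strike `K` are independent: this prices a gap call. -/
theorem call_price_formula_of_geometric_symmetry_general
    (hf : Integrable f) (hsym : IsGeometricallySymmetric f) (k K : ℝ) :
    ∫ x in Set.Ioi k, (Real.exp x - K) * f x =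
      cdfOf f (-k) - K * ((∫ x, f x) - cdfOf f k) :=
  calc ∫ x in Set.Ioi k, (Real.exp x - K) * f x
      = (∫ x in Set.Ioi k, Real.exp x * f x) - K * ∫ x in Set.Ioi k, f x := by
        simp only [sub_mul]
        rw [integral_sub (hsym.integrable_exp_mul hf).integrableOn (hf.const_mul K).integrableOn,
          integral_const_mul]
    _ = cdfOf f (-k) - K * ((∫ x, f x) - cdfOf f k) := by
        rw [hsym.setIntegral_Ioi_exp_mul, setIntegral_Ioi_eq_integral_sub_cdfOf hf]

end

/-- **Call price formula under geometric symmetry:**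
`C(K) = F(−log K) − K·(1 − F(log K))` for all `K > 0`. -/
theorem call_price_formula_of_geometric_symmetry
    (f : ℝ → ℝ)
    (hf_meas : Measurable f) (hf_nonneg : ∀ x, 0 ≤ f x)
    (hf_int : Integrable f) (hf_prob : ∫ x, f x = 1)
    (hsym : ∀ x : ℝ, Real.exp (x / 2) * f x = Real.exp (-x / 2) * f (-x)) :
    ∀ K : ℝ, 0 < K →
      callPrice f K = cdfOf f (-Real.log K) - K * (1 - cdfOf f (Real.log K)) := by
  intro K _
  rw [callPrice, call_price_formula_of_geometric_symmetry_general hf_int (.of_forall hsym), hf_prob]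
end

section
/- With f_{v,+}, f_{v,−}, a, b and f_v as defined, the following identities hold for all x ∈ ℝ: b·e^{x/2}·f_{v,+}(x) = a·e^{-x/2}·f_{v,−}(−x) and a·e^{x/2}·f_{v,−}(x) = b·e^{-x/2}·f_{v,+}(−x). Consequently the mixture density f_v satisfies the geometric symmetry condition e^{x/2} f_v(x) = e^{-x/2} f_v(−x) for all x ∈ ℝ. -/
open MeasureTheory

/-- Density of the variance-gamma component `X^+_T` (Gaussian mixed over a
`Γ(cT, λ+μ/2)` time change). -/
noncomputable def vgPlus (c lam mu T v x : ℝ) : ℝ :=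
  ∫ l in Set.Ioi (0 : ℝ),
    (Real.sqrt (2 * Real.pi * v ^ 2 * l))⁻¹ *
      Real.exp (-(x - (mu - v ^ 2 / 2) * l) ^ 2 / (2 * v ^ 2 * l)) *
      ((lam + mu / 2) ^ (c * T) / Real.Gamma (c * T)) * l ^ (c * T - 1) *
      Real.exp (-(lam + mu / 2) * l)

/-- Density of the variance-gamma component `X^-_T` (Gaussian mixed over a
`Γ(cT, λ-μ/2)` time change). -/
noncomputable def vgMinus (c lam mu T v x : ℝ) : ℝ :=
  ∫ l in Set.Ioi (0 : ℝ),
    (Real.sqrt (2 * Real.pi * v ^ 2 * l))⁻¹ *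
      Real.exp (-(x - (-mu - v ^ 2 / 2) * l) ^ 2 / (2 * v ^ 2 * l)) *
      ((lam - mu / 2) ^ (c * T) / Real.Gamma (c * T)) * l ^ (c * T - 1) *
      Real.exp (-(lam - mu / 2) * l)

/-- Mixture weight `a = (1 + μ/(2λ))^{cT}`. -/
noncomputable def mixA (c lam mu T : ℝ) : ℝ := (1 + mu / (2 * lam)) ^ (c * T)

/-- Mixture weight `b = (1 - μ/(2λ))^{cT}`. -/
noncomputable def mixB (c lam mu T : ℝ) : ℝ := (1 - mu / (2 * lam)) ^ (c * T)

/-- Density of the variance-gamma mixture model. -/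
noncomputable def vgMix (c lam mu T v x : ℝ) : ℝ :=
  (mixA c lam mu T * vgMinus c lam mu T v x + mixB c lam mu T * vgPlus c lam mu T v x) /
    (mixA c lam mu T + mixB c lam mu T)

/-! Moving between `x` and `-x` in a Gaussian density of mean `m - s / 2` and variance `s`, while
flipping the sign of `m`, costs `exp (m - x)`. Evaluated at the random time `l`, the mean parameter
is `m = θ * l`, and the factor `exp (θ * l)` is absorbed by the gamma time change: it lowers the
rate from `r` to `r - θ`, up to the ratio `r ^ k / (r - θ) ^ k` of normalizing constants. For
`θ = μ`, `r = λ + μ / 2` and `k = c * T` this ratio is `a / b`. -/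

section ComponentSymmetry

open ProbabilityTheory

theorem exp_half_mul_gaussianPDFReal (m : ℝ) (s : NNReal) (x : ℝ) :
    Real.exp (x / 2) * gaussianPDFReal (m - s / 2) s x =
      Real.exp (-x / 2) * gaussianPDFReal (-m - s / 2) s (-x) * Real.exp m := by
  rcases eq_or_ne s 0 with rfl | hs
  · simp
  have hs' : (s : ℝ) ≠ 0 := NNReal.coe_ne_zero.mpr hs
  have exponent_eq : x / 2 + -(x - (m - s / 2)) ^ 2 / (2 * s) =
      -x / 2 + -(-x - (-m - s / 2)) ^ 2 / (2 * s) + m := by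
    field_simp
    ring
  have exp_eq := congrArg Real.exp exponent_eq
  simp only [Real.exp_add] at exp_eq
  simp only [gaussianPDFReal]
  linear_combination (√(2 * Real.pi * s))⁻¹ * exp_eq

theorem rpow_mul_gammaPDFReal_mul_exp (k r θ l : ℝ) :
    (r - θ) ^ k * gammaPDFReal k r l * Real.exp (θ * l) =
      r ^ k * gammaPDFReal k (r - θ) l := by
  have exp_eq : Real.exp (-(r * l)) * Real.exp (θ * l) = Real.exp (-((r - θ) * l)) := by
    rw [← Real.exp_add]
    ring_nf
  unfold gammaPDFReal
  split_ifs
  · linear_combination (r - θ) ^ k * (r ^ k / Real.Gamma k * l ^ (k - 1)) * exp_eq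
  · simp

/-- The variance-gamma density: the density at `x` of a Brownian motion with volatility `v` and
drift `θ - v ^ 2 / 2`, run up to an independent gamma time of shape `k` and rate `r`. It expresses
both components `f_{v,±}` (with `θ = ±μ`) through the Gaussian and gamma densities. The variance
`v ^ 2 * l` goes through `Real.toNNReal` only because `gaussianPDFReal` takes it in `ℝ≥0`. -/
noncomputable def varianceGammaPDFReal (θ v k r x : ℝ) : ℝ :=
  ∫ l in Set.Ioi (0 : ℝ),
    gaussianPDFReal (θ * l - (v ^ 2 * l).toNNReal / 2) (v ^ 2 * l).toNNReal x * gammaPDFReal k r l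

theorem varianceGammaPDFReal_geometric_symmetry (θ v k r x : ℝ) :
    (r - θ) ^ k * Real.exp (x / 2) * varianceGammaPDFReal θ v k r x =
      r ^ k * Real.exp (-x / 2) * varianceGammaPDFReal (-θ) v k (r - θ) (-x) := by
  simp only [varianceGammaPDFReal, ← integral_const_mul, neg_mul]
  congr! 2 with l
  set s := (v ^ 2 * l).toNNReal
  calc
    (r - θ) ^ k * Real.exp (x / 2) * (gaussianPDFReal (θ * l - s / 2) s x * gammaPDFReal k r l)
      = (r - θ) ^ k * gammaPDFReal k r l *
          (Real.exp (x / 2) * gaussianPDFReal (θ * l - s / 2) s x) := by ring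
    _ = (r - θ) ^ k * gammaPDFReal k r l * Real.exp (θ * l) *
          (Real.exp (-x / 2) * gaussianPDFReal (-(θ * l) - s / 2) s (-x)) := by
      rw [exp_half_mul_gaussianPDFReal]
      ring
    _ = r ^ k * Real.exp (-x / 2) *
          (gaussianPDFReal (-(θ * l) - s / 2) s (-x) * gammaPDFReal k (r - θ) l) := by
      rw [rpow_mul_gammaPDFReal_mul_exp]
      ring

theorem varianceGammaPDFReal_eq_integral (θ v k r x : ℝ) :
    varianceGammaPDFReal θ v k r x =
      ∫ l in Set.Ioi (0 : ℝ),
        (√(2 * Real.pi * v ^ 2 * l))⁻¹ *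
          Real.exp (-(x - (θ - v ^ 2 / 2) * l) ^ 2 / (2 * v ^ 2 * l)) *
          (r ^ k / Real.Gamma k) * l ^ (k - 1) * Real.exp (-r * l) := by
  refine setIntegral_congr_fun measurableSet_Ioi fun l hl => ?_
  have hl : 0 < l := hl
  simp only [gaussianPDFReal, gammaPDFReal, if_pos hl.le,
    Real.coe_toNNReal _ (mul_nonneg (sq_nonneg v) hl.le)]
  ring_nf

end ComponentSymmetry

section MixtureSymmetry

variable {c lam mu T v : ℝ}

theorem vgPlus_eq_varianceGammaPDFReal (x : ℝ) :
    vgPlus c lam mu T v x = varianceGammaPDFReal mu v (c * T) (lam + mu / 2) x :=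
  (varianceGammaPDFReal_eq_integral ..).symm

theorem vgMinus_eq_varianceGammaPDFReal (x : ℝ) :
    vgMinus c lam mu T v x = varianceGammaPDFReal (-mu) v (c * T) (lam - mu / 2) x :=
  (varianceGammaPDFReal_eq_integral ..).symm

theorem mixA_eq_div (hlam : 0 < lam) (hmu : |mu| ≤ 2 * lam) :
    mixA c lam mu T = (lam + mu / 2) ^ (c * T) / lam ^ (c * T) := by
  rw [← Real.div_rpow (by linarith [neg_abs_le mu]) hlam.le, mixA]
  congr 1
  field_simp

theorem mixB_eq_div (hlam : 0 < lam) (hmu : |mu| ≤ 2 * lam) :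
    mixB c lam mu T = (lam - mu / 2) ^ (c * T) / lam ^ (c * T) := by
  rw [← Real.div_rpow (by linarith [le_abs_self mu]) hlam.le, mixB]
  congr 1
  field_simp

theorem mixB_mul_exp_half_mul_vgPlus (hlam : 0 < lam) (hmu : |mu| ≤ 2 * lam) (x : ℝ) :
    mixB c lam mu T * Real.exp (x / 2) * vgPlus c lam mu T v x =
      mixA c lam mu T * Real.exp (-x / 2) * vgMinus c lam mu T v (-x) := by
  have symm := varianceGammaPDFReal_geometric_symmetry mu v (c * T) (lam + mu / 2) x
  have rate_eq : lam + mu / 2 - mu = lam - mu / 2 := by ring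
  rw [rate_eq] at symm
  rw [mixA_eq_div hlam hmu, mixB_eq_div hlam hmu, vgPlus_eq_varianceGammaPDFReal,
    vgMinus_eq_varianceGammaPDFReal]
  linear_combination symm / lam ^ (c * T)

theorem mixA_mul_exp_half_mul_vgMinus (hlam : 0 < lam) (hmu : |mu| ≤ 2 * lam) (x : ℝ) :
    mixA c lam mu T * Real.exp (x / 2) * vgMinus c lam mu T v x =
      mixB c lam mu T * Real.exp (-x / 2) * vgPlus c lam mu T v (-x) := by
  simpa only [neg_neg] using (mixB_mul_exp_half_mul_vgPlus hlam hmu (-x)).symm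

theorem exp_half_mul_vgMix (hlam : 0 < lam) (hmu : |mu| ≤ 2 * lam) (x : ℝ) :
    Real.exp (x / 2) * vgMix c lam mu T v x = Real.exp (-x / 2) * vgMix c lam mu T v (-x) := by
  unfold vgMix
  linear_combination (mixB_mul_exp_half_mul_vgPlus (c := c) (T := T) (v := v) hlam hmu x +
    mixA_mul_exp_half_mul_vgMinus (c := c) (T := T) (v := v) hlam hmu x) /
      (mixA c lam mu T + mixB c lam mu T)

end MixtureSymmetry

/-- **Geometric symmetry of the variance-gamma mixture.** The component densities satisfy
`b e^{x/2} f_+(x) = a e^{-x/2} f_-(-x)` and `a e^{x/2} f_-(x) = b e^{-x/2} f_+(-x)`,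
and consequently the mixture density satisfies `e^{x/2} f_v(x) = e^{-x/2} f_v(-x)`. -/
theorem vg_mixture_geometric_symmetry
    (c lam mu T v : ℝ)
    (hc : 0 < c) (hlam : 0 < lam) (hmu : 0 < mu) (hT : 0 < T) (hv : 0 < v)
    (hmu2lam : mu < 2 * lam) :
    (∀ x : ℝ, mixB c lam mu T * Real.exp (x / 2) * vgPlus c lam mu T v x =
        mixA c lam mu T * Real.exp (-x / 2) * vgMinus c lam mu T v (-x)) ∧
    (∀ x : ℝ, mixA c lam mu T * Real.exp (x / 2) * vgMinus c lam mu T v x =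
        mixB c lam mu T * Real.exp (-x / 2) * vgPlus c lam mu T v (-x)) ∧
    (∀ x : ℝ, Real.exp (x / 2) * vgMix c lam mu T v x =
        Real.exp (-x / 2) * vgMix c lam mu T v (-x)) := by
  have hmu_abs : |mu| ≤ 2 * lam := (abs_of_pos hmu).trans_le hmu2lam.le
  exact ⟨mixB_mul_exp_half_mul_vgPlus hlam hmu_abs, mixA_mul_exp_half_mul_vgMinus hlam hmu_abs,
    exp_half_mul_vgMix hlam hmu_abs⟩
end

section
/- With f_v, a, b as defined, let m_v(u) = ∫_ℝ e^{u x} f_v(x) dx ∈ [0,∞]. Then for every u ∈ ℝ with v²(u² − u)/2 − μu + μ/2 < λ and v²(u² − u)/2 + μu − μ/2 < λ, one has m_v(u) = (ab/(a+b)) · [ (1 − (v²(u² − u)/2 − μu + μ/2)/λ)^{−cT} + (1 − (v²(u² − u)/2 + μu − μ/2)/λ)^{−cT} ]. Moreover m_v(u) = m_v(1 − u) for all u ∈ ℝ (as an equality in [0,∞]), and sup{ r ∈ ℝ : m_v(r) < ∞ } is finite. -/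
open MeasureTheory

/-- Moment generating function of the mixture density, valued in `[0,∞]`. -/
noncomputable def vgMixMgf (c lam mu T v u : ℝ) : ENNReal :=
  ∫⁻ x, ENNReal.ofReal (Real.exp (u * x) * vgMix c lam mu T v x)

/-! Both components are normal mean-variance mixtures: given a gamma variable `l`, the law is
Gaussian with mean `θ * l` and variance `v ^ 2 * l`. Integrating out the Gaussian first turns an
exponential moment of a component at `u` into one of its gamma law at `θ * u + v ^ 2 * u ^ 2 / 2`.
Gamma laws of equal shape are exponential tilts of each other, so each component can be referred to
the common rate `λ`: the change of rate costs exactly the factors `a` and `b`, and, with `M` the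
moment generating function of the gamma law of shape `c * T` and rate `λ`, one gets,
in `[0, ∞]` and for every `u`,
`m_v(u) = (a * b / (a + b)) * (M(φ(-μ, u)) + M(φ(μ, u)))`,
where `φ(μ, u) = v ^ 2 * (u ^ 2 - u) / 2 + μ * u - μ / 2`. The closed form is that of `M`, the
symmetry is `φ(μ, 1 - u) = φ(-μ, u)`, and `m_v` is infinite for large `u` because `φ` grows
quadratically while `M = ∞` on `[λ, ∞)`.
-/

open ProbabilityTheory Filter Set
open scoped ENNReal NNReal

section Tonelli

variable {α β : Type*} [MeasurableSpace α] [MeasurableSpace β] {μ : Measure α} {ν : Measure β}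

lemma lintegral_mul_ofReal_integral_swap [SFinite μ] [SFinite ν] {f : α → β → ℝ} {g : α → ℝ≥0∞}
    (hg : AEMeasurable g μ) (hf : Integrable (Function.uncurry f) (μ.prod ν))
    (hf₀ : ∀ᵐ x ∂μ, 0 ≤ᵐ[ν] f x) :
    ∫⁻ x, g x * ENNReal.ofReal (∫ y, f x y ∂ν) ∂μ =
      ∫⁻ y, ∫⁻ x, g x * ENNReal.ofReal (f x y) ∂μ ∂ν := by
  rw [← lintegral_lintegral_swap (hg.comp_fst.mul hf.aemeasurable.ennreal_ofReal)]
  refine lintegral_congr_ae ?_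
  filter_upwards [hf.prod_right_ae, hf₀] with x (hfx : Integrable (f x) ν) hfx₀
  rw [ofReal_integral_eq_lintegral_ofReal hfx hfx₀,
    lintegral_const_mul'' _ hfx.aemeasurable.ennreal_ofReal]

end Tonelli

/-- The moment generating function `t ↦ ∫ exp (t * x) ∂μ` of a measure on `ℝ`, with values in
`[0, ∞]`. Unlike `ProbabilityTheory.mgf` it is `∞`, rather than `0`, where the integral diverges. -/
noncomputable def lmgf (μ : Measure ℝ) (t : ℝ) : ℝ≥0∞ :=
  ∫⁻ x, ENNReal.ofReal (Real.exp (t * x)) ∂μ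

lemma lmgf_zero (μ : Measure ℝ) [IsProbabilityMeasure μ] : lmgf μ 0 = 1 := by
  simp [lmgf]

lemma monotone_lmgf {μ : Measure ℝ} (hμ : ∀ᵐ x ∂μ, 0 ≤ x) : Monotone (lmgf μ) := by
  intro s t hst
  refine lintegral_mono_ae ?_
  filter_upwards [hμ] with x hx
  gcongr

lemma lmgf_withDensity (μ : Measure ℝ) {f : ℝ → ℝ≥0∞} (hf : Measurable f) (t : ℝ) :
    lmgf (μ.withDensity f) t = ∫⁻ x, ENNReal.ofReal (Real.exp (t * x)) * f x ∂μ := by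
  rw [lmgf, lintegral_withDensity_eq_lintegral_mul _ hf (by fun_prop)]
  simp only [Pi.mul_apply, mul_comm]

lemma lmgf_gaussianReal (m : ℝ) (V : ℝ≥0) (t : ℝ) :
    lmgf (gaussianReal m V) t = ENNReal.ofReal (Real.exp (m * t + V * t ^ 2 / 2)) := by
  rw [lmgf, ← ofReal_integral_eq_lintegral_ofReal (integrable_exp_mul_gaussianReal t)
    (ae_of_all _ fun x ↦ (Real.exp_pos _).le)]
  exact congrArg ENNReal.ofReal (congrFun mgf_id_gaussianReal t)

section Gamma

variable {s r : ℝ}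

lemma measurable_gammaPDF (s r : ℝ) : Measurable (gammaPDF s r) :=
  (measurable_gammaPDFReal s r).ennreal_ofReal

lemma ae_pos_gammaMeasure (s r : ℝ) : ∀ᵐ x ∂gammaMeasure s r, 0 < x := by
  rw [gammaMeasure, ae_withDensity_iff (measurable_gammaPDF s r)]
  filter_upwards [Measure.ae_ne volume (0 : ℝ)] with x hx₀ hx
  exact lt_of_le_of_ne (not_lt.1 (mt gammaPDF_of_neg hx)) hx₀.symm

lemma integral_gammaMeasure (hs : 0 < s) (hr : 0 < r) (f : ℝ → ℝ) :
    ∫ x, f x ∂gammaMeasure s r =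
      ∫ x in Ioi 0, r ^ s / Real.Gamma s * x ^ (s - 1) * Real.exp (-(r * x)) * f x := by
  rw [gammaMeasure, integral_withDensity_eq_integral_toReal_smul
      (measurable_gammaPDF s r) (ae_of_all _ fun x ↦ ENNReal.ofReal_lt_top),
    ← setIntegral_eq_integral_of_forall_compl_eq_zero (s := Ici 0), integral_Ici_eq_integral_Ioi]
  · refine setIntegral_congr_fun measurableSet_Ioi fun x (hx : 0 < x) ↦ ?_
    simp only [gammaPDF_of_nonneg hx.le, smul_eq_mul]
    rw [ENNReal.toReal_ofReal (by positivity)]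
  · intro x hx
    rw [gammaPDF_of_neg (not_le.1 hx), ENNReal.toReal_zero, zero_smul]

lemma lmgf_gammaMeasure_tilt {q : ℝ} (s : ℝ) (hr : 0 < r) (hq : 0 < q) (t : ℝ) :
    lmgf (gammaMeasure s r) t =
      ENNReal.ofReal ((r / q) ^ s) * lmgf (gammaMeasure s q) (t - r + q) := by
  have hmeas : Measurable fun x ↦
      ENNReal.ofReal (Real.exp ((t - r + q) * x)) * gammaPDF s q x :=
    Measurable.mul (by fun_prop) (measurable_gammaPDF s q)
  simp only [gammaMeasure, lmgf_withDensity _ (measurable_gammaPDF _ _)]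
  rw [← lintegral_const_mul _ hmeas]
  refine lintegral_congr fun x ↦ ?_
  rcases lt_or_ge x 0 with hx | hx
  · simp only [gammaPDF_of_neg hx, mul_zero]
  · have hexp : Real.exp (t * x) * Real.exp (-(r * x)) =
        Real.exp ((t - r + q) * x) * Real.exp (-(q * x)) := by
      simp only [← Real.exp_add]
      ring_nf
    have hrate : (r / q) ^ s * q ^ s = r ^ s := by
      rw [← Real.mul_rpow (by positivity) hq.le, div_mul_cancel₀ r hq.ne']
    simp only [gammaPDF_of_nonneg hx]
    rw [← ENNReal.ofReal_mul (by positivity), ← ENNReal.ofReal_mul (by positivity),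
      ← ENNReal.ofReal_mul (by positivity), ← hrate]
    congr 1
    linear_combination (r / q) ^ s * q ^ s / Real.Gamma s * x ^ (s - 1) * hexp

lemma lmgf_gammaMeasure_of_lt {t : ℝ} (hs : 0 < s) (hr : 0 < r) (ht : t < r) :
    lmgf (gammaMeasure s r) t = ENNReal.ofReal ((1 - t / r) ^ (-s)) := by
  have hrt : 0 < r - t := sub_pos.2 ht
  have := isProbabilityMeasure_gammaMeasure hs hrt
  rw [lmgf_gammaMeasure_tilt s hr hrt, show t - r + (r - t) = 0 by ring, lmgf_zero, mul_one,
    one_sub_div hr.ne', Real.rpow_neg (by positivity), ← Real.inv_rpow (by positivity), inv_div]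

lemma lmgf_gammaMeasure_of_le {t : ℝ} (hs : 0 < s) (hr : 0 < r) (ht : r ≤ t) :
    lmgf (gammaMeasure s r) t = ∞ := by
  -- Tilting to rate `r / k` leaves a positive exponent, so only the prefactor `k ^ s` matters.
  have rpow_le (k : ℝ) (hk : 0 < k) : ENNReal.ofReal (k ^ s) ≤ lmgf (gammaMeasure s r) t := by
    have hrk : 0 < r / k := by positivity
    have := isProbabilityMeasure_gammaMeasure hs hrk
    calc ENNReal.ofReal (k ^ s)
      _ = ENNReal.ofReal ((r / (r / k)) ^ s) * lmgf (gammaMeasure s (r / k)) 0 := by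
        rw [lmgf_zero, mul_one, div_div_cancel₀ hr.ne']
      _ ≤ ENNReal.ofReal ((r / (r / k)) ^ s) * lmgf (gammaMeasure s (r / k)) (t - r + r / k) := by
        gcongr
        exact monotone_lmgf ((ae_pos_gammaMeasure _ _).mono fun _ ↦ le_of_lt) (by linarith)
      _ = lmgf (gammaMeasure s r) t := (lmgf_gammaMeasure_tilt s hr hrk t).symm
  exact top_unique <| le_of_tendsto (ENNReal.tendsto_ofReal_atTop.comp (tendsto_rpow_atTop hs))
    ((eventually_gt_atTop 0).mono rpow_le)

end Gamma

section NormalMixture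

variable {Ω : Type*} [MeasurableSpace Ω] {ν : Measure Ω} {m : Ω → ℝ} {V : Ω → ℝ≥0}

/-- The density of the normal mean-variance mixture: the law of a Gaussian whose mean `m ω` and
variance `V ω` are randomised by `ω ∼ ν`. Points with `V ω = 0` contribute nothing, as
`gaussianPDFReal` vanishes there. -/
noncomputable def normalMixturePDFReal (ν : Measure Ω) (m : Ω → ℝ) (V : Ω → ℝ≥0) (x : ℝ) : ℝ :=
  ∫ ω, gaussianPDFReal (m ω) (V ω) x ∂ν

lemma normalMixturePDFReal_nonneg (ν : Measure Ω) (m : Ω → ℝ) (V : Ω → ℝ≥0) (x : ℝ) :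
    0 ≤ normalMixturePDFReal ν m V x :=
  integral_nonneg fun _ ↦ gaussianPDFReal_nonneg _ _ _

lemma measurable_normalMixturePDFReal [SFinite ν] (hm : Measurable m) (hV : Measurable V) :
    Measurable (normalMixturePDFReal ν m V) := by
  have hpdf : Measurable fun p : ℝ × Ω ↦ gaussianPDFReal (m p.2) (V p.2) p.1 := by fun_prop
  exact hpdf.stronglyMeasurable.integral_prod_right.measurable

lemma integrable_gaussianPDFReal_prod [IsFiniteMeasure ν] (hm : Measurable m) (hV : Measurable V)
    (hV₀ : ∀ᵐ ω ∂ν, V ω ≠ 0) :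
    Integrable (Function.uncurry fun x ω ↦ gaussianPDFReal (m ω) (V ω) x)
      ((volume : Measure ℝ).prod ν) := by
  have hpdf : Measurable (Function.uncurry fun (x : ℝ) ω ↦ gaussianPDFReal (m ω) (V ω) x) := by
    unfold Function.uncurry
    fun_prop
  refine (integrable_prod_iff' hpdf.aestronglyMeasurable).2
    ⟨ae_of_all _ fun ω ↦ integrable_gaussianPDFReal (m ω) (V ω), ?_⟩
  refine (integrable_const (1 : ℝ)).congr ?_
  filter_upwards [hV₀] with ω hω
  simp only [Function.uncurry_apply_pair, Real.norm_of_nonneg (gaussianPDFReal_nonneg _ _ _),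
    integral_gaussianPDFReal_eq_one _ hω]

lemma lintegral_exp_mul_normalMixturePDFReal [IsFiniteMeasure ν] (hm : Measurable m)
    (hV : Measurable V) (hV₀ : ∀ᵐ ω ∂ν, V ω ≠ 0) (u : ℝ) :
    ∫⁻ x, ENNReal.ofReal (Real.exp (u * x)) * ENNReal.ofReal (normalMixturePDFReal ν m V x) =
      ∫⁻ ω, ENNReal.ofReal (Real.exp (m ω * u + V ω * u ^ 2 / 2)) ∂ν := by
  unfold normalMixturePDFReal
  rw [lintegral_mul_ofReal_integral_swap (by fun_prop) (integrable_gaussianPDFReal_prod hm hV hV₀)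
    (ae_of_all _ fun x ↦ ae_of_all _ fun ω ↦ gaussianPDFReal_nonneg _ _ _)]
  refine lintegral_congr_ae ?_
  filter_upwards [hV₀] with ω hω
  rw [← lmgf_gaussianReal, gaussianReal_of_var_ne_zero _ hω,
    lmgf_withDensity _ (measurable_gaussianPDF _ _)]
  rfl

end NormalMixture

section VarianceGamma

variable {c lam mu T v : ℝ}

/-- The exponent `φ(μ, u)` at which the moment generating function of the gamma law of rate `λ` has
to be evaluated to obtain, up to a constant factor, the one of `X^+_T` at `u`; for `X^-_T` it is
`φ(-μ, u)`. -/
noncomputable def vgExponent (mu v u : ℝ) : ℝ := v ^ 2 * (u ^ 2 - u) / 2 + mu * u - mu / 2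

lemma vgExponent_one_sub (mu v u : ℝ) : vgExponent mu v (1 - u) = vgExponent (-mu) v u := by
  unfold vgExponent
  ring

lemma tendsto_vgExponent_atTop (mu : ℝ) (hv : v ≠ 0) : Tendsto (vgExponent mu v) atTop atTop := by
  have hlin : Tendsto (fun u : ℝ ↦ v ^ 2 / 2 * u + (mu - v ^ 2 / 2)) atTop atTop :=
    tendsto_atTop_add_const_right _ _ (tendsto_id.const_mul_atTop (by positivity))
  refine (tendsto_atTop_add_const_right _ (-(mu / 2)) (tendsto_id.atTop_mul_atTop₀ hlin)).congr
    fun u ↦ ?_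
  simp only [vgExponent, id]
  ring

lemma vgMinus_eq_vgPlus_neg (c lam mu T v x : ℝ) :
    vgMinus c lam mu T v x = vgPlus c lam (-mu) T v x := by
  simp only [vgMinus, vgPlus, neg_div, ← sub_eq_add_neg]

lemma mixB_eq_mixA_neg (c lam mu T : ℝ) : mixB c lam mu T = mixA c lam (-mu) T := by
  simp only [mixB, mixA, neg_div, ← sub_eq_add_neg]

lemma vgPlus_eq_normalMixturePDFReal (hcT : 0 < c * T) (hrate : 0 < lam + mu / 2) (v : ℝ) :
    vgPlus c lam mu T v =
      normalMixturePDFReal (gammaMeasure (c * T) (lam + mu / 2))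
        (fun l ↦ (mu - v ^ 2 / 2) * l) (fun l ↦ (v ^ 2 * l).toNNReal) := by
  funext x
  rw [normalMixturePDFReal, integral_gammaMeasure hcT hrate, vgPlus]
  refine setIntegral_congr_fun measurableSet_Ioi fun l (hl : 0 < l) ↦ ?_
  have hvar : 0 ≤ v ^ 2 * l := by positivity
  simp only [gaussianPDFReal, Real.coe_toNNReal _ hvar, neg_mul, mul_assoc]
  ring

lemma mixA_eq_rpow_div (hlam : lam ≠ 0) (c mu T : ℝ) :
    mixA c lam mu T = ((lam + mu / 2) / lam) ^ (c * T) := by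
  rw [mixA]
  congr 1
  field_simp

lemma lintegral_exp_mul_vgPlus (hcT : 0 < c * T) (hlam : 0 < lam) (hrate : 0 < lam + mu / 2)
    (hv : v ≠ 0) (u : ℝ) :
    ∫⁻ x, ENNReal.ofReal (Real.exp (u * x)) * ENNReal.ofReal (vgPlus c lam mu T v x) =
      ENNReal.ofReal (mixA c lam mu T) *
        lmgf (gammaMeasure (c * T) lam) (vgExponent mu v u) := by
  have := isProbabilityMeasure_gammaMeasure hcT hrate
  have hpos := ae_pos_gammaMeasure (c * T) (lam + mu / 2)
  have hvar : ∀ᵐ l ∂gammaMeasure (c * T) (lam + mu / 2), (v ^ 2 * l).toNNReal ≠ 0 := by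
    filter_upwards [hpos] with l hl
    exact (Real.toNNReal_pos.2 (by positivity)).ne'
  calc _ = lmgf (gammaMeasure (c * T) (lam + mu / 2))
          ((mu - v ^ 2 / 2) * u + v ^ 2 * u ^ 2 / 2) := by
        rw [vgPlus_eq_normalMixturePDFReal hcT hrate,
          lintegral_exp_mul_normalMixturePDFReal (by fun_prop) (by fun_prop) hvar]
        refine lintegral_congr_ae ?_
        filter_upwards [hpos] with l hl
        rw [Real.coe_toNNReal _ (by positivity)]
        ring_nf
    _ = _ := by
        rw [lmgf_gammaMeasure_tilt _ hrate hlam, mixA_eq_rpow_div hlam.ne', vgExponent]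
        ring_nf

lemma vgPlus_nonneg (hcT : 0 < c * T) (hrate : 0 < lam + mu / 2) (v x : ℝ) :
    0 ≤ vgPlus c lam mu T v x := by
  rw [vgPlus_eq_normalMixturePDFReal hcT hrate]
  exact normalMixturePDFReal_nonneg _ _ _ _

lemma measurable_vgPlus (hcT : 0 < c * T) (hrate : 0 < lam + mu / 2) (v : ℝ) :
    Measurable (vgPlus c lam mu T v) := by
  have := isProbabilityMeasure_gammaMeasure hcT hrate
  rw [vgPlus_eq_normalMixturePDFReal hcT hrate]
  exact measurable_normalMixturePDFReal (by fun_prop) (by fun_prop)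

lemma mixA_pos (hlam : 0 < lam) (hrate : 0 < lam + mu / 2) (c T : ℝ) : 0 < mixA c lam mu T := by
  rw [mixA_eq_rpow_div hlam.ne']
  positivity

lemma mixB_pos (hlam : 0 < lam) (hrate : 0 < lam - mu / 2) (c T : ℝ) : 0 < mixB c lam mu T := by
  rw [mixB_eq_mixA_neg]
  exact mixA_pos hlam (by linarith) c T

lemma ofReal_exp_mul_vgMix (hcT : 0 < c * T) (hmu : |mu| < 2 * lam) (v u x : ℝ) :
    ENNReal.ofReal (Real.exp (u * x) * vgMix c lam mu T v x) =
      ENNReal.ofReal (mixA c lam mu T / (mixA c lam mu T + mixB c lam mu T)) *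
        (ENNReal.ofReal (Real.exp (u * x)) * ENNReal.ofReal (vgPlus c lam (-mu) T v x)) +
      ENNReal.ofReal (mixB c lam mu T / (mixA c lam mu T + mixB c lam mu T)) *
        (ENNReal.ofReal (Real.exp (u * x)) * ENNReal.ofReal (vgPlus c lam mu T v x)) := by
  obtain ⟨hmu₁, hmu₂⟩ := abs_lt.1 hmu
  have hA : 0 < mixA c lam mu T := mixA_pos (by linarith) (by linarith) c T
  have hB : 0 < mixB c lam mu T := mixB_pos (by linarith) (by linarith) c T
  have hplus : 0 ≤ vgPlus c lam mu T v x := vgPlus_nonneg hcT (by linarith) v x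
  have hminus : 0 ≤ vgPlus c lam (-mu) T v x := vgPlus_nonneg hcT (by linarith) v x
  simp only [← ENNReal.ofReal_mul (Real.exp_pos _).le]
  rw [← ENNReal.ofReal_mul (by positivity), ← ENNReal.ofReal_mul (by positivity),
    ← ENNReal.ofReal_add (by positivity) (by positivity), vgMix, vgMinus_eq_vgPlus_neg]
  congr 1
  ring

lemma vgMixMgf_eq_lmgf_gammaMeasure (hcT : 0 < c * T) (hmu : |mu| < 2 * lam) (hv : v ≠ 0) (u : ℝ) :
    vgMixMgf c lam mu T v u =
      ENNReal.ofReal (mixA c lam mu T * mixB c lam mu T / (mixA c lam mu T + mixB c lam mu T)) *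
        (lmgf (gammaMeasure (c * T) lam) (vgExponent (-mu) v u) +
          lmgf (gammaMeasure (c * T) lam) (vgExponent mu v u)) := by
  obtain ⟨hmu₁, hmu₂⟩ := abs_lt.1 hmu
  have hlam : 0 < lam := by linarith
  have hplus : 0 < lam + mu / 2 := by linarith
  have hminus : 0 < lam + -mu / 2 := by linarith
  have hA := mixA_pos hlam hplus c T
  have hB := mixB_pos hlam (by linarith : 0 < lam - mu / 2) c T
  have hmeas {mu' : ℝ} (hrate : 0 < lam + mu' / 2) : Measurable fun x ↦
      ENNReal.ofReal (Real.exp (u * x)) * ENNReal.ofReal (vgPlus c lam mu' T v x) :=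
    Measurable.mul (by fun_prop) (measurable_vgPlus hcT hrate v).ennreal_ofReal
  simp only [vgMixMgf, ofReal_exp_mul_vgMix hcT hmu]
  rw [lintegral_add_left ((hmeas hminus).const_mul _), lintegral_const_mul _ (hmeas hminus),
    lintegral_const_mul _ (hmeas hplus), lintegral_exp_mul_vgPlus hcT hlam hminus hv,
    lintegral_exp_mul_vgPlus hcT hlam hplus hv, ← mixB_eq_mixA_neg, ← mul_assoc, ← mul_assoc,
    ← ENNReal.ofReal_mul (by positivity), ← ENNReal.ofReal_mul (by positivity), mul_add]
  congr 3 <;> ring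

theorem vg_mixture_mgf_general (hcT : 0 < c * T) (hmu : |mu| < 2 * lam) (hv : v ≠ 0) :
    (∀ u : ℝ, v ^ 2 * (u ^ 2 - u) / 2 - mu * u + mu / 2 < lam →
      v ^ 2 * (u ^ 2 - u) / 2 + mu * u - mu / 2 < lam →
      vgMixMgf c lam mu T v u = ENNReal.ofReal
        ((mixA c lam mu T * mixB c lam mu T / (mixA c lam mu T + mixB c lam mu T)) *
          ((1 - (v ^ 2 * (u ^ 2 - u) / 2 - mu * u + mu / 2) / lam) ^ (-(c * T)) +
           (1 - (v ^ 2 * (u ^ 2 - u) / 2 + mu * u - mu / 2) / lam) ^ (-(c * T))))) ∧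
    (∀ u : ℝ, vgMixMgf c lam mu T v u = vgMixMgf c lam mu T v (1 - u)) ∧
    BddAbove {r : ℝ | vgMixMgf c lam mu T v r < ⊤} := by
  obtain ⟨hmu₁, hmu₂⟩ := abs_lt.1 hmu
  have hlam : 0 < lam := by linarith
  have hA := mixA_pos hlam (by linarith : 0 < lam + mu / 2) c T
  have hB := mixB_pos hlam (by linarith : 0 < lam - mu / 2) c T
  have hmgf := vgMixMgf_eq_lmgf_gammaMeasure hcT hmu hv
  refine ⟨fun u hminus hplus ↦ ?_, fun u ↦ ?_, ?_⟩
  · have hneg : vgExponent (-mu) v u = v ^ 2 * (u ^ 2 - u) / 2 - mu * u + mu / 2 := by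
      unfold vgExponent
      ring
    have hbase {y : ℝ} (hy : y < lam) : 0 ≤ (1 - y / lam) ^ (-(c * T)) :=
      Real.rpow_nonneg (sub_nonneg.2 ((div_lt_one hlam).2 hy).le) _
    rw [hmgf, hneg, vgExponent, lmgf_gammaMeasure_of_lt hcT hlam hminus,
      lmgf_gammaMeasure_of_lt hcT hlam hplus, ← ENNReal.ofReal_add (hbase hminus) (hbase hplus),
      ← ENNReal.ofReal_mul (by positivity)]
  · rw [hmgf, hmgf, vgExponent_one_sub, vgExponent_one_sub, neg_neg,
      add_comm (lmgf _ _)]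
  · obtain ⟨R, hR⟩ := eventually_atTop.1 ((tendsto_vgExponent_atTop mu hv).eventually_ge_atTop lam)
    refine ⟨R, fun r (hr : vgMixMgf c lam mu T v r < ⊤) ↦ not_lt.1 fun hRr ↦ hr.ne ?_⟩
    rw [hmgf, lmgf_gammaMeasure_of_le hcT hlam (hR r hRr.le), add_top,
      ENNReal.mul_top (ENNReal.ofReal_pos.2 (by positivity)).ne']

end VarianceGamma

/-- **MGF of the variance-gamma mixture.** Explicit formula on the strip of finiteness,
symmetry `m(u) = m(1-u)`, and semi-heavy tails (the set of exponents with finite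
exponential moment is bounded above). -/
theorem vg_mixture_mgf
    (c lam mu T v : ℝ)
    (hc : 0 < c) (hlam : 0 < lam) (hmu : 0 < mu) (hT : 0 < T) (hv : 0 < v)
    (hmu2lam : mu < 2 * lam) :
    (∀ u : ℝ, v ^ 2 * (u ^ 2 - u) / 2 - mu * u + mu / 2 < lam →
      v ^ 2 * (u ^ 2 - u) / 2 + mu * u - mu / 2 < lam →
      vgMixMgf c lam mu T v u = ENNReal.ofReal
        ((mixA c lam mu T * mixB c lam mu T / (mixA c lam mu T + mixB c lam mu T)) *
          ((1 - (v ^ 2 * (u ^ 2 - u) / 2 - mu * u + mu / 2) / lam) ^ (-(c * T)) +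
           (1 - (v ^ 2 * (u ^ 2 - u) / 2 + mu * u - mu / 2) / lam) ^ (-(c * T))))) ∧
    (∀ u : ℝ, vgMixMgf c lam mu T v u = vgMixMgf c lam mu T v (1 - u)) ∧
    BddAbove {r : ℝ | vgMixMgf c lam mu T v r < ⊤} :=
  vg_mixture_mgf_general (mul_pos hc hT) (by rwa [abs_of_pos hmu]) hv.ne'
end

section
/- The double gamma density f_0 satisfies the geometric symmetry condition e^{x/2} f_0(x) = e^{-x/2} f_0(−x) for all x ∈ ℝ. -/
open MeasureTheory

/-- `λ₊ = λ/μ + 1/2`. -/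
noncomputable def lamPlus (lam mu : ℝ) : ℝ := lam / mu + 1 / 2

/-- `λ₋ = λ/μ - 1/2`. -/
noncomputable def lamMinus (lam mu : ℝ) : ℝ := lam / mu - 1 / 2

/-- The asymmetric double gamma density. -/
noncomputable def doubleGamma (c lam mu T x : ℝ) : ℝ :=
  if x < 0 then
    (mixA c lam mu T / (mixA c lam mu T + mixB c lam mu T)) *
      (lamMinus lam mu ^ (c * T) / Real.Gamma (c * T)) * (-x) ^ (c * T - 1) *
      Real.exp (lamMinus lam mu * x)
  else if 0 < x then
    (mixB c lam mu T / (mixA c lam mu T + mixB c lam mu T)) *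
      (lamPlus lam mu ^ (c * T) / Real.Gamma (c * T)) * x ^ (c * T - 1) *
      Real.exp (-lamPlus lam mu * x)
  else 0

/-!
The symmetry says that `x ↦ e^{x/2} f₀(x)` is even. Tilting by `e^{x/2}` shifts both exponential
rates `λ₊` and `λ₋` to their mean `λ/μ`, so only the two coefficients remain to be compared. Since
`1 ± μ/(2λ) = (μ/λ) λ_±`, both `a λ₋^{cT}` and `b λ₊^{cT}` equal `(μ/λ)^{cT} λ₊^{cT} λ₋^{cT}`.
-/

section Weights

variable {lam mu : ℝ}

theorem lamPlus_nonneg (hlam : 0 ≤ lam) (hmu : 0 ≤ mu) : 0 ≤ lamPlus lam mu := by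
  unfold lamPlus
  positivity

theorem lamMinus_nonneg (hmu : 0 < mu) (h : mu ≤ 2 * lam) : 0 ≤ lamMinus lam mu := by
  have half_le : 1 / 2 ≤ lam / mu := by
    rw [le_div_iff₀ hmu]
    linarith
  exact sub_nonneg.mpr half_le

theorem one_add_div_eq_mul_lamPlus (hlam : lam ≠ 0) (hmu : mu ≠ 0) :
    1 + mu / (2 * lam) = mu / lam * lamPlus lam mu := by
  unfold lamPlus
  field_simp

theorem one_sub_div_eq_mul_lamMinus (hlam : lam ≠ 0) (hmu : mu ≠ 0) :
    1 - mu / (2 * lam) = mu / lam * lamMinus lam mu := by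
  unfold lamMinus
  field_simp

theorem mixA_eq_mul_lamPlus_rpow (c T : ℝ) (hlam : 0 < lam) (hmu : 0 < mu) :
    mixA c lam mu T = (mu / lam) ^ (c * T) * lamPlus lam mu ^ (c * T) := by
  rw [mixA, one_add_div_eq_mul_lamPlus hlam.ne' hmu.ne',
    Real.mul_rpow (by positivity) (lamPlus_nonneg hlam.le hmu.le)]

theorem mixB_eq_mul_lamMinus_rpow (c T : ℝ) (hmu : 0 < mu) (h : mu ≤ 2 * lam) :
    mixB c lam mu T = (mu / lam) ^ (c * T) * lamMinus lam mu ^ (c * T) := by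
  have hlam : 0 < lam := by linarith
  rw [mixB, one_sub_div_eq_mul_lamMinus hlam.ne' hmu.ne',
    Real.mul_rpow (by positivity) (lamMinus_nonneg hmu h)]

theorem mixA_mul_lamMinus_rpow (c T : ℝ) (hmu : 0 < mu) (h : mu ≤ 2 * lam) :
    mixA c lam mu T * lamMinus lam mu ^ (c * T) =
      mixB c lam mu T * lamPlus lam mu ^ (c * T) := by
  have hlam : 0 < lam := by linarith
  rw [mixA_eq_mul_lamPlus_rpow c T hlam hmu, mixB_eq_mul_lamMinus_rpow c T hmu h]
  ring

end Weights

section Tilting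

variable (c lam mu T x : ℝ)

theorem exp_half_mul_exp_neg_lamPlus_mul :
    Real.exp (x / 2) * Real.exp (-lamPlus lam mu * x) = Real.exp (-(lam / mu) * x) := by
  rw [← Real.exp_add, lamPlus]
  ring_nf

theorem exp_half_mul_exp_lamMinus_mul :
    Real.exp (x / 2) * Real.exp (lamMinus lam mu * x) = Real.exp (lam / mu * x) := by
  rw [← Real.exp_add, lamMinus]
  ring_nf

variable {x}

theorem exp_half_mul_doubleGamma_of_pos (hx : 0 < x) :
    Real.exp (x / 2) * doubleGamma c lam mu T x =
      mixB c lam mu T * lamPlus lam mu ^ (c * T) /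
          (mixA c lam mu T + mixB c lam mu T) / Real.Gamma (c * T) *
        x ^ (c * T - 1) * Real.exp (-(lam / mu) * x) := by
  rw [doubleGamma, if_neg hx.not_gt, if_pos hx, ← exp_half_mul_exp_neg_lamPlus_mul]
  ring

theorem exp_half_mul_doubleGamma_of_neg (hx : x < 0) :
    Real.exp (x / 2) * doubleGamma c lam mu T x =
      mixA c lam mu T * lamMinus lam mu ^ (c * T) /
          (mixA c lam mu T + mixB c lam mu T) / Real.Gamma (c * T) *
        (-x) ^ (c * T - 1) * Real.exp (lam / mu * x) := by
  rw [doubleGamma, if_pos hx, ← exp_half_mul_exp_lamMinus_mul]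
  ring

variable {lam mu}

theorem exp_half_mul_doubleGamma_of_ne_zero (hmu : 0 < mu) (h : mu ≤ 2 * lam) (hx : x ≠ 0) :
    Real.exp (x / 2) * doubleGamma c lam mu T x =
      mixB c lam mu T * lamPlus lam mu ^ (c * T) /
          (mixA c lam mu T + mixB c lam mu T) / Real.Gamma (c * T) *
        |x| ^ (c * T - 1) * Real.exp (-(lam / mu) * |x|) := by
  rcases hx.lt_or_gt with hneg | hpos
  · rw [exp_half_mul_doubleGamma_of_neg c lam mu T hneg, mixA_mul_lamMinus_rpow c T hmu h,
      abs_of_neg hneg, neg_mul_neg]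
  · rw [exp_half_mul_doubleGamma_of_pos c lam mu T hpos, abs_of_pos hpos]

end Tilting

/-- **Geometric symmetry of the double gamma density:**
`e^{x/2} f₀(x) = e^{-x/2} f₀(-x)` for all `x`. -/
theorem doubleGamma_geometric_symmetry
    (c lam mu T : ℝ)
    (hc : 0 < c) (hlam : 0 < lam) (hmu : 0 < mu) (hT : 0 < T)
    (hmu2lam : mu < 2 * lam) :
    ∀ x : ℝ, Real.exp (x / 2) * doubleGamma c lam mu T x =
      Real.exp (-x / 2) * doubleGamma c lam mu T (-x) := by
  intro x
  rcases eq_or_ne x 0 with rfl | hx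
  · rw [neg_zero]
  · rw [exp_half_mul_doubleGamma_of_ne_zero c T hmu hmu2lam.le hx,
      exp_half_mul_doubleGamma_of_ne_zero c T hmu hmu2lam.le (neg_ne_zero.mpr hx), abs_neg]
end

section
/- With f_v and f_0 as defined (with the same parameters c, λ, μ, T), for every compact set A ⊂ ℝ with 0 ∉ A, one has sup_{x ∈ A} | f_v(x) − f_0(x) | → 0 as v → 0+; i.e., f_v converges to f_0 uniformly on compact subsets of ℝ \ {0}. -/
open MeasureTheory

/-!
For a Brownian motion run at an independent time `L` with density `g`, started at zero with drift
`m > 0`, the event of being at `x > 0` concentrates at `L = x / m` as the volatility `v` tends to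
zero. The substitution `l = x / m * exp (2 * v * u)` makes this exact: it turns the Gaussian
exponent into `-2 * x * m * (sinh (v * u) / v) ^ 2`, which is at most `-2 * x * m * u ^ 2` and
tends to it. Dominated convergence then gives the limit `g (x / m) / m`. On the other side of
zero, the reflection `x ↦ -x` multiplies the density by `exp (-2 * |x| * m / v ^ 2)`, so the limit
vanishes there. All these limits hold with `x` and the drift `m` varying as well. As the limit
function is continuous off zero, convergence along varying `x` upgrades to uniform convergence on
compact sets.
-/

open Filter Topology ProbabilityTheory Set Asymptotics

theorem tendstoUniformlyOn_of_tendsto_prod_nhdsWithin {ι α β : Type*} [TopologicalSpace α]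
    [UniformSpace β] {F : ι → α → β} {f : α → β} {p : Filter ι} {s : Set α} (hs : IsCompact s)
    (hf : ContinuousOn f s)
    (hF : ∀ x ∈ s, Tendsto (fun y : ι × α => F y.1 y.2) (p ×ˢ 𝓝[s] x) (𝓝 (f x))) :
    TendstoUniformlyOn F f p s := by
  rw [← tendstoLocallyUniformlyOn_iff_tendstoUniformlyOn_of_compact hs,
    tendstoLocallyUniformlyOn_iff_forall_tendsto]
  intro x hx
  have hlimit : Tendsto (fun y : ι × α => f y.2) (p ×ˢ 𝓝[s] x) (𝓝 (f x)) :=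
    (hf x hx).tendsto.comp tendsto_snd
  exact (hlimit.prodMk_nhds (hF x hx)).mono_right (nhds_le_uniformity _)

theorem integral_Ioi_zero_eq_integral_comp_exp {E : Type*} [NormedAddCommGroup E]
    [NormedSpace ℝ E] (f : ℝ → E) {q c : ℝ} (hq : 0 < q) (hc : c ≠ 0) :
    ∫ l in Ioi 0, f l = ∫ u, (|c| * (q * Real.exp (c * u))) • f (q * Real.exp (c * u)) := by
  have himage : (fun t => Real.exp t) '' univ = Ioi 0 := by
    rw [image_univ, Real.range_exp]
  have hexp : ∫ l in Ioi 0, f (q * l) = ∫ t, Real.exp t • f (q * Real.exp t) := by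
    rw [← himage, integral_image_eq_integral_abs_deriv_smul MeasurableSet.univ
      (fun t _ => (Real.hasDerivAt_exp t).hasDerivWithinAt) Real.exp_injective.injOn]
    simp only [Real.abs_exp, setIntegral_univ]
  have hscale : ∫ t, Real.exp t • f (q * Real.exp t) =
      |c| • ∫ u, Real.exp (c * u) • f (q * Real.exp (c * u)) := by
    rw [Measure.integral_comp_mul_left (fun t => Real.exp t • f (q * Real.exp t)) c, smul_smul,
      abs_inv, mul_inv_cancel₀ (abs_ne_zero.mpr hc), one_smul]
  have hdilate := integral_comp_mul_left_Ioi' f 0 hq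
  rw [mul_zero] at hdilate
  rw [← hdilate, hexp, hscale, smul_smul, ← integral_smul]
  simp only [smul_smul]
  congr! 3
  ring

theorem sq_le_sinh_sq (y : ℝ) : y ^ 2 ≤ Real.sinh y ^ 2 := by
  rw [sq_le_sq, Real.abs_sinh]
  exact Real.self_le_sinh_iff.mpr (abs_nonneg y)

theorem tendsto_sinh_mul_div (u : ℝ) :
    Tendsto (fun v => Real.sinh (v * u) / v) (𝓝[≠] 0) (𝓝 u) := by
  have hderiv : HasDerivAt (fun v => Real.sinh (v * u)) u 0 := by
    simpa using ((hasDerivAt_id (0 : ℝ)).mul_const u).sinh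
  simpa [div_eq_inv_mul] using hderiv.tendsto_slope_zero

theorem abs_log_le_add_inv {l : ℝ} (hl : 0 < l) : |Real.log l| ≤ l + l⁻¹ := by
  have hinv : 0 < l⁻¹ := inv_pos.mpr hl
  have hlog := Real.log_le_self hl.le
  have hlog_inv := Real.log_le_self hinv.le
  rw [Real.log_inv] at hlog_inv
  exact abs_le.mpr ⟨by linarith, by linarith⟩

/-- At most exponential growth at infinity and at most exponential blow-up (in `l⁻¹`) at zero.
The weight `l + l⁻¹` is `2 * cosh (log l)`, so it is quadratic in `sinh` along `l = exp (2 * y)`. -/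
def ExpBoundedOnIoi (g : ℝ → ℝ) : Prop :=
  ∃ κ : ℝ, g =O[𝓟 (Ioi 0)] fun l => Real.exp (κ * (l + l⁻¹))

namespace ExpBoundedOnIoi

variable {g h : ℝ → ℝ}

theorem mul (hg : ExpBoundedOnIoi g) (hh : ExpBoundedOnIoi h) :
    ExpBoundedOnIoi fun l => g l * h l := by
  obtain ⟨κ, hκ⟩ := hg
  obtain ⟨κ', hκ'⟩ := hh
  refine ⟨κ + κ', ?_⟩
  simpa only [← Real.exp_add, ← add_mul] using hκ.mul hκ'

theorem const_mul (hg : ExpBoundedOnIoi g) (a : ℝ) : ExpBoundedOnIoi fun l => a * g l :=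
  hg.imp fun _ hκ => hκ.const_mul_left a

theorem congr (hg : ExpBoundedOnIoi g) (hgh : EqOn g h (Ioi 0)) : ExpBoundedOnIoi h :=
  hg.imp fun _ hκ => hκ.congr' hgh.eventuallyEq EventuallyEq.rfl

theorem of_abs_le {κ : ℝ} (hκ : ∀ l > 0, |g l| ≤ Real.exp (κ * (l + l⁻¹))) :
    ExpBoundedOnIoi g :=
  ⟨κ, IsBigO.of_norm_eventuallyLE (eventually_principal.mpr hκ)⟩

theorem rpow (p : ℝ) : ExpBoundedOnIoi fun l => l ^ p := by
  refine of_abs_le (κ := |p|) fun l hl => ?_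
  rw [abs_of_pos (Real.rpow_pos_of_pos hl p), Real.rpow_def_of_pos hl,
    Real.exp_le_exp, mul_comm]
  calc p * Real.log l ≤ |p| * |Real.log l| := (le_abs_self _).trans (abs_mul _ _).le
    _ ≤ |p| * (l + l⁻¹) := by gcongr; exact abs_log_le_add_inv hl

theorem sqrt : ExpBoundedOnIoi Real.sqrt := by
  simpa only [← Real.sqrt_eq_rpow] using rpow (1 / 2)

theorem exp_const_mul (a : ℝ) : ExpBoundedOnIoi fun l => Real.exp (a * l) := by
  refine of_abs_le (κ := |a|) fun l hl => ?_
  rw [Real.abs_exp, Real.exp_le_exp]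
  calc a * l ≤ |a| * l := by gcongr; exact le_abs_self a
    _ ≤ |a| * (l + l⁻¹) := by gcongr; exact le_add_of_nonneg_right (inv_nonneg.mpr hl.le)

theorem exists_abs_le_exp_sinh_sq (hg : ExpBoundedOnIoi g) :
    ∃ M κ : ℝ, 0 ≤ M ∧ ∀ q > 0, ∀ y,
      |g (q * Real.exp (2 * y))| ≤ M * Real.exp (κ * (q + q⁻¹) * (1 + Real.sinh y ^ 2)) := by
  obtain ⟨κ, hκ⟩ := hg
  obtain ⟨M, hM, hbound⟩ := hκ.exists_nonneg
  rw [isBigOWith_principal] at hbound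
  refine ⟨M, 4 * |κ|, hM, fun q hq y => ?_⟩
  have hcosh : Real.exp (2 * y) + Real.exp (-(2 * y)) = 2 + 4 * Real.sinh y ^ 2 := by
    have hcosh_eq := Real.cosh_eq (2 * y)
    rw [Real.cosh_two_mul, Real.cosh_sq] at hcosh_eq
    linarith
  have hweight : q * Real.exp (2 * y) + (q * Real.exp (2 * y))⁻¹ ≤
      4 * (q + q⁻¹) * (1 + Real.sinh y ^ 2) := by
    have hinv : 0 < q⁻¹ := inv_pos.mpr hq
    calc q * Real.exp (2 * y) + (q * Real.exp (2 * y))⁻¹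
      _ = q * Real.exp (2 * y) + q⁻¹ * Real.exp (-(2 * y)) := by rw [mul_inv, Real.exp_neg]
      _ ≤ (q + q⁻¹) * (Real.exp (2 * y) + Real.exp (-(2 * y))) := by
        nlinarith [mul_pos hq (Real.exp_pos (-(2 * y))), mul_pos hinv (Real.exp_pos (2 * y))]
      _ ≤ 4 * (q + q⁻¹) * (1 + Real.sinh y ^ 2) := by rw [hcosh]; nlinarith
  calc |g (q * Real.exp (2 * y))|
    _ ≤ M * Real.exp (κ * (q * Real.exp (2 * y) + (q * Real.exp (2 * y))⁻¹)) := by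
      simpa using hbound (q * Real.exp (2 * y)) (mul_pos hq (Real.exp_pos _))
    _ ≤ M * Real.exp (|κ| * (4 * (q + q⁻¹) * (1 + Real.sinh y ^ 2))) := by
      gcongr
      exact le_abs_self κ
    _ = M * Real.exp (4 * |κ| * (q + q⁻¹) * (1 + Real.sinh y ^ 2)) := by ring_nf

end ExpBoundedOnIoi

section Laplace

variable {ι : Type*} {F : Filter ι} {g : ℝ → ℝ} {v r q : ι → ℝ} {r₀ q₀ : ℝ}

theorem eventually_abs_laplaceIntegrand_le (hg : ExpBoundedOnIoi g)
    (hv : Tendsto v F (𝓝[≠] 0)) (hr : Tendsto r F (𝓝 r₀)) (hr₀ : 0 < r₀)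
    (hq : Tendsto q F (𝓝 q₀)) (hq₀ : 0 < q₀) :
    ∃ K, ∀ᶠ i in F, ∀ u,
      |Real.exp (-r i * (Real.sinh (v i * u) / v i) ^ 2) * g (q i * Real.exp (2 * (v i * u)))| ≤
        K * Real.exp (-(r₀ / 2) * u ^ 2) := by
  obtain ⟨M, κ, hM, hbound⟩ := hg.exists_abs_le_exp_sinh_sq
  have hweight : Tendsto (fun i => κ * (q i + (q i)⁻¹)) F (𝓝 (κ * (q₀ + q₀⁻¹))) :=
    (hq.add (hq.inv₀ hq₀.ne')).const_mul κ
  have hrate : Tendsto (fun i => r i - κ * (q i + (q i)⁻¹) * v i ^ 2) F (𝓝 r₀) := by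
    simpa using hr.sub (hweight.mul ((hv.mono_right nhdsWithin_le_nhds).pow 2))
  refine ⟨M * Real.exp (κ * (q₀ + q₀⁻¹) + 1), ?_⟩
  filter_upwards [hv.eventually self_mem_nhdsWithin, hq.eventually_const_lt hq₀,
    hweight.eventually_lt_const (lt_add_one _), hrate.eventually_const_lt (half_lt_self hr₀)]
    with i (hvi : v i ≠ 0) hqi hweight_i hrate_i u
  set s := Real.sinh (v i * u) / v i with hs
  have hsinh : Real.sinh (v i * u) = v i * s := by rw [hs]; field_simp
  have hus : u ^ 2 ≤ s ^ 2 := by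
    have hle := sq_le_sinh_sq (v i * u)
    rw [hsinh, mul_pow, mul_pow] at hle
    exact le_of_mul_le_mul_left hle (by positivity)
  have hexponent : -r i * s ^ 2 + κ * (q i + (q i)⁻¹) * (1 + (v i * s) ^ 2) ≤
      κ * (q₀ + q₀⁻¹) + 1 + -(r₀ / 2) * u ^ 2 := by
    have hdecay : r₀ / 2 * u ^ 2 ≤ (r i - κ * (q i + (q i)⁻¹) * v i ^ 2) * s ^ 2 :=
      mul_le_mul hrate_i.le hus (sq_nonneg u) ((half_pos hr₀).trans hrate_i).le
    linarith
  calc |Real.exp (-r i * s ^ 2) * g (q i * Real.exp (2 * (v i * u)))|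
    _ ≤ Real.exp (-r i * s ^ 2) *
        (M * Real.exp (κ * (q i + (q i)⁻¹) * (1 + (v i * s) ^ 2))) := by
      rw [abs_mul, Real.abs_exp, ← hsinh]
      gcongr
      exact hbound _ hqi _
    _ = M * Real.exp (-r i * s ^ 2 + κ * (q i + (q i)⁻¹) * (1 + (v i * s) ^ 2)) := by
      rw [Real.exp_add]; ring
    _ ≤ M * Real.exp (κ * (q₀ + q₀⁻¹) + 1 + -(r₀ / 2) * u ^ 2) := by gcongr
    _ = M * Real.exp (κ * (q₀ + q₀⁻¹) + 1) * Real.exp (-(r₀ / 2) * u ^ 2) := by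
      rw [Real.exp_add, mul_assoc]

theorem tendsto_laplaceIntegral [F.IsCountablyGenerated] (hgc : ContinuousOn g (Ioi 0))
    (hg : ExpBoundedOnIoi g) (hv : Tendsto v F (𝓝[≠] 0)) (hr : Tendsto r F (𝓝 r₀))
    (hr₀ : 0 < r₀) (hq : Tendsto q F (𝓝 q₀)) (hq₀ : 0 < q₀) :
    Tendsto (fun i => ∫ u, Real.exp (-r i * (Real.sinh (v i * u) / v i) ^ 2) *
        g (q i * Real.exp (2 * (v i * u)))) F (𝓝 (√(Real.pi / r₀) * g q₀)) := by
  obtain ⟨K, hK⟩ := eventually_abs_laplaceIntegrand_le hg hv hr hr₀ hq hq₀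
  rw [← integral_gaussian, ← integral_mul_const]
  refine tendsto_integral_filter_of_dominated_convergence
    (fun u => K * Real.exp (-(r₀ / 2) * u ^ 2)) ?_ (hK.mono fun i hi => ae_of_all _ hi)
    ((integrable_exp_neg_mul_sq (half_pos hr₀)).const_mul K) (ae_of_all _ fun u => ?_)
  · filter_upwards [hq.eventually_const_lt hq₀] with i hqi
    have hcomp : Continuous fun u => g (q i * Real.exp (2 * (v i * u))) :=
      hgc.comp_continuous (by fun_prop) fun u => mul_pos hqi (Real.exp_pos _)
    have hgauss : Continuous fun u => Real.exp (-r i * (Real.sinh (v i * u) / v i) ^ 2) := by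
      fun_prop
    exact (hgauss.mul hcomp).aestronglyMeasurable
  · have hvu : Tendsto (fun i => 2 * (v i * u)) F (𝓝 0) := by
      simpa using ((hv.mono_right nhdsWithin_le_nhds).mul_const u).const_mul 2
    have hpoint : Tendsto (fun i => q i * Real.exp (2 * (v i * u))) F (𝓝 q₀) := by
      simpa using hq.mul hvu.rexp
    have hsinh := (tendsto_sinh_mul_div u).comp hv
    exact (hr.neg.mul (hsinh.pow 2)).rexp.mul
      ((hgc.continuousAt (Ioi_mem_nhds hq₀)).tendsto.comp hpoint)

end Laplace

/-- The density at `x` of `m * L + v * W L`, where `W` is a Brownian motion and `L` an independent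
positive random time with density `g`: a normal mean-variance mixture. -/
noncomputable def subordinatedPDF (g : ℝ → ℝ) (m v x : ℝ) : ℝ :=
  ∫ l in Ioi 0, gaussianPDFReal (m * l) (v ^ 2 * l).toNNReal x * g l

theorem subordinatedPDF_neg_neg (g : ℝ → ℝ) (m v x : ℝ) :
    subordinatedPDF g (-m) v (-x) = subordinatedPDF g m v x := by
  have hsq (l : ℝ) : (-x - -m * l) ^ 2 = (x - m * l) ^ 2 := by ring
  simp only [subordinatedPDF, gaussianPDFReal, hsq]

theorem subordinatedPDF_neg (g : ℝ → ℝ) (m : ℝ) {v : ℝ} (hv : v ≠ 0) (x : ℝ) :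
    subordinatedPDF g m v (-x) = Real.exp (-(2 * x * m / v ^ 2)) * subordinatedPDF g m v x := by
  simp only [subordinatedPDF]
  rw [← integral_const_mul]
  refine setIntegral_congr_fun measurableSet_Ioi fun l (hl : 0 < l) => ?_
  have hexponent : -(-x - m * l) ^ 2 / (2 * (v ^ 2 * l)) =
      -(2 * x * m / v ^ 2) + -(x - m * l) ^ 2 / (2 * (v ^ 2 * l)) := by
    field_simp
    ring
  simp only [gaussianPDFReal, Real.coe_toNNReal _ (by positivity : 0 ≤ v ^ 2 * l), hexponent,
    Real.exp_add]
  ring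

-- With `l = x / m * exp (2 * y)`, one has `(x - m * l) ^ 2 = 4 * x * m * l * sinh y ^ 2`.
theorem gaussianPDFReal_exp {m v x y l : ℝ} (hv : v ≠ 0) (hl : 0 < l)
    (hly : l = x / m * Real.exp (2 * y)) :
    gaussianPDFReal (m * l) (v ^ 2 * l).toNNReal x =
      (√(2 * Real.pi) * |v| * √l)⁻¹ * Real.exp (-(2 * x * m) * (Real.sinh y / v) ^ 2) := by
  have hexponent : -(x - m * l) ^ 2 / (2 * (v ^ 2 * l)) =
      -(2 * x * m) * (Real.sinh y / v) ^ 2 := by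
    obtain ⟨hx, hm⟩ := div_ne_zero_iff.mp (left_ne_zero_of_mul (hly ▸ hl.ne'))
    rw [hly, Real.sinh_eq, two_mul y, Real.exp_add, Real.exp_neg]
    field_simp
    ring
  have hsqrt : √(2 * Real.pi * (v ^ 2 * l)) = √(2 * Real.pi) * |v| * √l := by
    rw [Real.sqrt_mul (by positivity : 0 ≤ 2 * Real.pi), Real.sqrt_mul (sq_nonneg v),
      Real.sqrt_sq_eq_abs, mul_assoc]
  rw [gaussianPDFReal, Real.coe_toNNReal _ (by positivity), hexponent, hsqrt]

theorem subordinatedPDF_eq_laplaceIntegral (g : ℝ → ℝ) {m v x : ℝ} (hv : v ≠ 0)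
    (hxm : 0 < x / m) :
    subordinatedPDF g m v x = 2 / √(2 * Real.pi) *
      ∫ u, Real.exp (-(2 * x * m) * (Real.sinh (v * u) / v) ^ 2) *
        (√(x / m * Real.exp (2 * (v * u))) * g (x / m * Real.exp (2 * (v * u)))) := by
  rw [subordinatedPDF,
    integral_Ioi_zero_eq_integral_comp_exp _ hxm (mul_ne_zero two_ne_zero hv),
    ← integral_const_mul]
  refine integral_congr_ae (ae_of_all _ fun u => ?_)
  simp only [mul_assoc 2 v u, smul_eq_mul]
  set l := x / m * Real.exp (2 * (v * u)) with hly
  have hl : 0 < l := by positivity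
  rw [gaussianPDFReal_exp hv hl hly, abs_mul, abs_two]
  nth_rw 1 [← Real.mul_self_sqrt hl.le]
  field_simp

section Limit

variable {ι : Type*} {F : Filter ι} [F.IsCountablyGenerated] {g : ℝ → ℝ} {m v x : ι → ℝ}
  {μ x₀ : ℝ}

theorem tendsto_subordinatedPDF_of_pos_of_pos (hgc : ContinuousOn g (Ioi 0))
    (hg : ExpBoundedOnIoi g) (hv : Tendsto v F (𝓝[≠] 0)) (hm : Tendsto m F (𝓝 μ)) (hμ : 0 < μ)
    (hx : Tendsto x F (𝓝 x₀)) (hx₀ : 0 < x₀) :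
    Tendsto (fun i => subordinatedPDF g (m i) (v i) (x i)) F (𝓝 (g (x₀ / μ) / μ)) := by
  have hratio : Tendsto (fun i => x i / m i) F (𝓝 (x₀ / μ)) := hx.div hm hμ.ne'
  have hlaplace := tendsto_laplaceIntegral (Real.continuous_sqrt.continuousOn.mul hgc)
    (ExpBoundedOnIoi.sqrt.mul hg) hv ((hx.const_mul 2).mul hm) (by positivity) hratio
    (by positivity)
  have hconst : 2 / √(2 * Real.pi) * (√(Real.pi / (2 * x₀ * μ)) * √(x₀ / μ)) = μ⁻¹ := by
    have hprod : Real.pi / (2 * x₀ * μ) * (x₀ / μ) = 2 * Real.pi / (2 * μ) ^ 2 := by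
      field_simp
    rw [← Real.sqrt_mul (by positivity), hprod, Real.sqrt_div (by positivity),
      Real.sqrt_sq (by positivity)]
    field_simp
  have hlimit : 2 / √(2 * Real.pi) * (√(Real.pi / (2 * x₀ * μ)) * (√(x₀ / μ) * g (x₀ / μ))) =
      g (x₀ / μ) / μ := by
    rw [← mul_assoc √(Real.pi / _), ← mul_assoc, hconst, inv_mul_eq_div]
  rw [← hlimit]
  refine (hlaplace.const_mul _).congr' ?_
  filter_upwards [hv.eventually self_mem_nhdsWithin, hratio.eventually_const_lt (div_pos hx₀ hμ)]
    with i hvi hratio_i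
  exact (subordinatedPDF_eq_laplaceIntegral g hvi hratio_i).symm

theorem tendsto_subordinatedPDF_of_pos_of_neg (hgc : ContinuousOn g (Ioi 0))
    (hg : ExpBoundedOnIoi g) (hv : Tendsto v F (𝓝[≠] 0)) (hm : Tendsto m F (𝓝 μ)) (hμ : 0 < μ)
    (hx : Tendsto x F (𝓝 x₀)) (hx₀ : x₀ < 0) :
    Tendsto (fun i => subordinatedPDF g (m i) (v i) (x i)) F (𝓝 0) := by
  have hreflected := tendsto_subordinatedPDF_of_pos_of_pos hgc hg hv hm hμ hx.neg (neg_pos.mpr hx₀)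
  have hinv : Tendsto (fun i => (v i ^ 2)⁻¹) F atTop := by
    simpa [Function.comp_def] using ((tendsto_pow_atTop two_ne_zero).comp
      tendsto_norm_inv_nhdsNE_zero_atTop).comp hv
  have hdamping : Tendsto (fun i => Real.exp (-(2 * -x i * m i / v i ^ 2))) F (𝓝 0) :=
    Real.tendsto_exp_neg_atTop_nhds_zero.comp
      (((hx.neg.const_mul 2).mul hm).pos_mul_atTop (by nlinarith) hinv)
  have hprod := hdamping.mul hreflected
  rw [zero_mul] at hprod
  refine hprod.congr' ?_
  filter_upwards [hv.eventually self_mem_nhdsWithin] with i hvi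
  rw [← subordinatedPDF_neg g (m i) hvi, neg_neg]

theorem tendsto_subordinatedPDF (hgc : ContinuousOn g (Ioi 0)) (hg : ExpBoundedOnIoi g)
    (hv : Tendsto v F (𝓝[≠] 0)) (hm : Tendsto m F (𝓝 μ)) (hμ : μ ≠ 0)
    (hx : Tendsto x F (𝓝 x₀)) (hx₀ : x₀ ≠ 0) :
    Tendsto (fun i => subordinatedPDF g (m i) (v i) (x i)) F
      (𝓝 ((Ioi 0).indicator g (x₀ / μ) / |μ|)) := by
  wlog hμ_pos : 0 < μ generalizing μ x₀ m x
  · have hμ_neg : 0 < -μ := neg_pos.mpr (lt_of_le_of_ne (not_lt.mp hμ_pos) hμ)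
    simpa only [subordinatedPDF_neg_neg, neg_div_neg_eq, abs_neg] using
      this hm.neg hμ_neg.ne' hx.neg (neg_ne_zero.mpr hx₀) hμ_neg
  rw [abs_of_pos hμ_pos]
  rcases hx₀.lt_or_gt with hneg | hpos
  · rw [indicator_of_notMem (notMem_Ioi.mpr (div_neg_of_neg_of_pos hneg hμ_pos).le), zero_div]
    exact tendsto_subordinatedPDF_of_pos_of_neg hgc hg hv hm hμ_pos hx hneg
  · rw [indicator_of_mem (mem_Ioi.mpr (div_pos hpos hμ_pos))]
    exact tendsto_subordinatedPDF_of_pos_of_pos hgc hg hv hm hμ_pos hx hpos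

end Limit

theorem continuousOn_indicator_Ioi_zero {g : ℝ → ℝ} (hgc : ContinuousOn g (Ioi 0)) :
    ContinuousOn ((Ioi 0).indicator g) {0}ᶜ := by
  intro x hx
  refine ContinuousAt.continuousWithinAt ?_
  rcases (mem_compl_singleton_iff.mp hx).lt_or_gt with hneg | hpos
  · exact continuousAt_const.congr <| mem_of_superset (Iio_mem_nhds hneg) fun y hy =>
      (indicator_of_notMem (notMem_Ioi.mpr (le_of_lt hy)) g).symm
  · exact (hgc.continuousAt (Ioi_mem_nhds hpos)).congr <|
      (eqOn_indicator.eventuallyEq_of_mem (Ioi_mem_nhds hpos)).symm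

theorem tendstoUniformlyOn_subordinatedPDF {ι : Type*} {p : Filter ι} [p.IsCountablyGenerated]
    {g : ℝ → ℝ} {m v : ι → ℝ} {μ : ℝ} {A : Set ℝ} (hgc : ContinuousOn g (Ioi 0))
    (hg : ExpBoundedOnIoi g) (hv : Tendsto v p (𝓝[≠] 0)) (hm : Tendsto m p (𝓝 μ)) (hμ : μ ≠ 0)
    (hA : IsCompact A) (hA₀ : 0 ∉ A) :
    TendstoUniformlyOn (fun i x => subordinatedPDF g (m i) (v i) x)
      (fun x => (Ioi 0).indicator g (x / μ) / |μ|) p A := by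
  have hne {x : ℝ} (hx : x ∈ A) : x ≠ 0 := ne_of_mem_of_not_mem hx hA₀
  refine tendstoUniformlyOn_of_tendsto_prod_nhdsWithin hA ?_ fun x hx => ?_
  · exact ((continuousOn_indicator_Ioi_zero hgc).comp (continuousOn_id.div_const μ)
      fun x hx => div_ne_zero (hne hx) hμ).div_const _
  · exact tendsto_subordinatedPDF hgc hg (hv.comp tendsto_fst) (hm.comp tendsto_fst) hμ
      (tendsto_snd.mono_right nhdsWithin_le_nhds) (hne hx)

section GammaTime

theorem gammaPDFReal_eqOn_Ioi (k θ : ℝ) : EqOn (gammaPDFReal k θ)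
    (fun l => θ ^ k / Real.Gamma k * l ^ (k - 1) * Real.exp (-θ * l)) (Ioi 0) :=
  fun l (hl : 0 < l) => by simp only [gammaPDFReal, if_pos hl.le, neg_mul]

theorem continuousOn_gammaPDFReal (k θ : ℝ) : ContinuousOn (gammaPDFReal k θ) (Ioi 0) := by
  refine ContinuousOn.congr ?_ (gammaPDFReal_eqOn_Ioi k θ)
  exact (continuousOn_const.mul (continuousOn_id.rpow_const fun l hl => Or.inl (ne_of_gt hl))).mul
    (by fun_prop)

theorem expBoundedOnIoi_gammaPDFReal (k θ : ℝ) : ExpBoundedOnIoi (gammaPDFReal k θ) :=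
  (((ExpBoundedOnIoi.rpow (k - 1)).const_mul (θ ^ k / Real.Gamma k)).mul
    (ExpBoundedOnIoi.exp_const_mul (-θ))).congr (gammaPDFReal_eqOn_Ioi k θ).symm

theorem indicator_gammaPDFReal_div (k : ℝ) {θ μ : ℝ} (hθ : 0 ≤ θ) (hμ : 0 < μ) (x : ℝ) :
    (Ioi 0).indicator (gammaPDFReal k θ) (x / μ) / μ =
      (Ioi 0).indicator (gammaPDFReal k (θ / μ)) x := by
  rcases le_or_gt x 0 with hx | hx
  · rw [indicator_of_notMem (notMem_Ioi.mpr (div_nonpos_of_nonpos_of_nonneg hx hμ.le)),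
      indicator_of_notMem (notMem_Ioi.mpr hx), zero_div]
  · have hxμ : x / μ ∈ Ioi 0 := div_pos hx hμ
    rw [indicator_of_mem hxμ, indicator_of_mem (mem_Ioi.mpr hx), gammaPDFReal_eqOn_Ioi k θ hxμ,
      gammaPDFReal_eqOn_Ioi k (θ / μ) hx]
    have hexponent : -θ * (x / μ) = -(θ / μ) * x := by ring
    simp only [hexponent, Real.div_rpow hx.le hμ.le, Real.div_rpow hθ hμ.le,
      Real.rpow_sub_one hμ.ne']
    field_simp

theorem subordinatedPDF_gammaPDFReal (k θ m v x : ℝ) :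
    subordinatedPDF (gammaPDFReal k θ) m v x = ∫ l in Ioi 0,
      (√(2 * Real.pi * v ^ 2 * l))⁻¹ * Real.exp (-(x - m * l) ^ 2 / (2 * v ^ 2 * l)) *
        (θ ^ k / Real.Gamma k) * l ^ (k - 1) * Real.exp (-θ * l) := by
  refine setIntegral_congr_fun measurableSet_Ioi fun l (hl : 0 < l) => ?_
  simp only [gaussianPDFReal, gammaPDFReal_eqOn_Ioi k θ hl,
    Real.coe_toNNReal _ (by positivity : 0 ≤ v ^ 2 * l), mul_assoc]

theorem vgMix_eq_subordinatedPDF (c lam mu T v x : ℝ) :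
    vgMix c lam mu T v x =
      mixA c lam mu T / (mixA c lam mu T + mixB c lam mu T) *
        subordinatedPDF (gammaPDFReal (c * T) (lam - mu / 2)) (-mu - v ^ 2 / 2) v x +
      mixB c lam mu T / (mixA c lam mu T + mixB c lam mu T) *
        subordinatedPDF (gammaPDFReal (c * T) (lam + mu / 2)) (mu - v ^ 2 / 2) v x := by
  rw [vgMix, vgMinus, vgPlus, subordinatedPDF_gammaPDFReal, subordinatedPDF_gammaPDFReal, add_div,
    mul_div_right_comm, mul_div_right_comm]

theorem doubleGamma_eq_indicator_gammaPDFReal (c lam mu T x : ℝ) :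
    doubleGamma c lam mu T x =
      mixA c lam mu T / (mixA c lam mu T + mixB c lam mu T) *
        (Ioi 0).indicator (gammaPDFReal (c * T) (lamMinus lam mu)) (-x) +
      mixB c lam mu T / (mixA c lam mu T + mixB c lam mu T) *
        (Ioi 0).indicator (gammaPDFReal (c * T) (lamPlus lam mu)) x := by
  rw [doubleGamma]
  split_ifs with hneg hpos
  · rw [indicator_of_mem (mem_Ioi.mpr (neg_pos.mpr hneg)), indicator_of_notMem
      (notMem_Ioi.mpr hneg.le), gammaPDFReal_eqOn_Ioi _ _ (mem_Ioi.mpr (neg_pos.mpr hneg))]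
    simp only [neg_mul_neg]
    ring
  · rw [indicator_of_notMem (notMem_Ioi.mpr (neg_nonpos.mpr hpos.le)), indicator_of_mem
      (mem_Ioi.mpr hpos), gammaPDFReal_eqOn_Ioi _ _ (mem_Ioi.mpr hpos)]
    ring
  · obtain rfl : x = 0 := le_antisymm (not_lt.mp hpos) (not_lt.mp hneg)
    simp

theorem doubleGamma_eq_indicator_gammaPDFReal_div (c T : ℝ) {lam mu : ℝ} (hmu : 0 < mu)
    (hmu2lam : mu < 2 * lam) (x : ℝ) :
    doubleGamma c lam mu T x =
      mixA c lam mu T / (mixA c lam mu T + mixB c lam mu T) *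
        ((Ioi 0).indicator (gammaPDFReal (c * T) (lam - mu / 2)) (x / -mu) / |-mu|) +
      mixB c lam mu T / (mixA c lam mu T + mixB c lam mu T) *
        ((Ioi 0).indicator (gammaPDFReal (c * T) (lam + mu / 2)) (x / mu) / |mu|) := by
  have hplus : lamPlus lam mu = (lam + mu / 2) / mu := by rw [lamPlus]; field_simp
  have hminus : lamMinus lam mu = (lam - mu / 2) / mu := by rw [lamMinus]; field_simp
  rw [abs_neg, abs_of_pos hmu, div_neg, ← neg_div, indicator_gammaPDFReal_div _ (by linarith) hmu,
    indicator_gammaPDFReal_div _ (by linarith) hmu, ← hplus, ← hminus,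
    doubleGamma_eq_indicator_gammaPDFReal]

end GammaTime

theorem tendsto_const_sub_sq_div_two (μ : ℝ) :
    Tendsto (fun v : ℝ => μ - v ^ 2 / 2) (𝓝[≠] 0) (𝓝 μ) := by
  have hcont : Continuous fun v : ℝ => μ - v ^ 2 / 2 := by fun_prop
  simpa using (hcont.tendsto 0).mono_left nhdsWithin_le_nhds

theorem vgMix_tendstoUniformlyOn_doubleGamma_general (c T : ℝ) {lam mu : ℝ} (hmu : 0 < mu)
    (hmu2lam : mu < 2 * lam) {A : Set ℝ} (hA : IsCompact A) (hA₀ : 0 ∉ A) :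
    TendstoUniformlyOn (fun v x => vgMix c lam mu T v x) (doubleGamma c lam mu T) (𝓝[≠] 0) A := by
  have hcomponent (a θ : ℝ) {μ : ℝ} (hμ : μ ≠ 0) :
      TendstoUniformlyOn
        (fun v x => a * subordinatedPDF (gammaPDFReal (c * T) θ) (μ - v ^ 2 / 2) v x)
        (fun x => a * ((Ioi 0).indicator (gammaPDFReal (c * T) θ) (x / μ) / |μ|)) (𝓝[≠] 0) A :=
    (uniformContinuous_const_smul a).comp_tendstoUniformlyOn
      (tendstoUniformlyOn_subordinatedPDF (continuousOn_gammaPDFReal _ _)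
        (expBoundedOnIoi_gammaPDFReal _ _) tendsto_id (tendsto_const_sub_sq_div_two μ) hμ hA hA₀)
  simp only [vgMix_eq_subordinatedPDF,
    funext (doubleGamma_eq_indicator_gammaPDFReal_div c T hmu hmu2lam)]
  exact (hcomponent _ _ (neg_ne_zero.mpr hmu.ne')).add (hcomponent _ _ hmu.ne')

/-- **Uniform convergence on compact subsets of `ℝ \ {0}`** of the variance-gamma mixture
densities to the double gamma density as `v → 0⁺`. -/
theorem vgMix_tendstoUniformlyOn_doubleGamma
    (c lam mu T : ℝ)
    (hc : 0 < c) (hlam : 0 < lam) (hmu : 0 < mu) (hT : 0 < T)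
    (hmu2lam : mu < 2 * lam) :
    ∀ A : Set ℝ, IsCompact A → 0 ∉ A →
      TendstoUniformlyOn (fun v x => vgMix c lam mu T v x) (doubleGamma c lam mu T)
        (nhdsWithin 0 (Set.Ioi 0)) A := by
  intro A hA hA₀ U hU
  exact (vgMix_tendstoUniformlyOn_doubleGamma_general c T hmu hmu2lam hA hA₀ U hU).filter_mono
    (nhdsGT_le_nhdsNE 0)
end

section
/- Let a_0, a_1, a_2, a_3 ∈ ℝ with a_2 < 0 and a_3 > 0, and define Δ : (0,∞) → ℝ by Δ(x) = a_0 + a_1·log(x) + a_2·x + a_3·x². If a_1 > 0, then the set { x ∈ (0,∞) : Δ(x) = 0 } has at most three elements. If a_1 ≤ 0, then this set has at most two elements. -/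
/-!
Multiplying the derivative of `a log x + p(x)` by `x` gives the polynomial `a + x p'(x)`, so by
Rolle's theorem the zeros of the former on `(0, ∞)` outnumber the positive roots of the latter by
at most one. For `p` quadratic, `a + x p'(x)` has at most two roots, and by Vieta two distinct
positive ones would force the product of its extreme coefficients to be positive.
-/

open Polynomial Set

theorem encard_le_encard_add_one_of_interleaved {α : Type*} [LinearOrder α] {s t : Set α}
    (h : ∀ x ∈ s, ∀ y ∈ s, x < y → ∃ z ∈ t, x < z ∧ z < y) :
    s.encard ≤ t.encard + 1 := by
  obtain ht | ht := t.finite_or_infinite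
  · lift t to Finset α using ht
    by_contra! hlt
    obtain ⟨u, hus, hu⟩ := exists_subset_encard_eq (Order.add_one_le_of_lt hlt)
    rw [encard_coe_eq_coe_finsetCard] at hu
    lift u to Finset α using finite_of_encard_eq_coe (k := t.card + 1 + 1) (mod_cast hu)
    rw [encard_coe_eq_coe_finsetCard] at hu
    norm_cast at hu
    have hu_le : u.card ≤ t.card + 1 := Finset.card_le_of_interleaved
      fun x hx y hy hxy _ ↦ h x (hus hx) y (hus hy) hxy
    omega
  · simp [ht.encard_eq]

/-- Since `deriv f` is `0` where `f` is not differentiable, such points are counted on the right. -/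
theorem encard_fiber_le_encard_deriv_eq_zero_add_one {f : ℝ → ℝ} {s : Set ℝ} (hs : s.OrdConnected)
    (hf : ContinuousOn f s) (c : ℝ) :
    {x ∈ s | f x = c}.encard ≤ {x ∈ interior s | deriv f x = 0}.encard + 1 := by
  refine encard_le_encard_add_one_of_interleaved fun x ⟨hxs, hx⟩ y ⟨hys, hy⟩ hxy ↦ ?_
  have hIcc : Icc x y ⊆ s := hs.out hxs hys
  obtain ⟨z, hz, hz'⟩ := exists_deriv_eq_zero hxy (hf.mono hIcc) (hx.trans hy.symm)
  exact ⟨z, ⟨interior_maximal (Ioo_subset_Icc_self.trans hIcc) isOpen_Ioo hz, hz'⟩, hz⟩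

theorem encard_setOf_isRoot_le_natDegree {R : Type*} [CommRing R] [IsDomain R] {p : R[X]}
    (hp : p ≠ 0) : {x | p.IsRoot x}.encard ≤ p.natDegree := by
  have hroots : {x | p.IsRoot x} = p.rootSet R := by
    ext x
    simp [mem_rootSet, hp]
  rw [hroots, ← (p.rootSet_finite R).cast_ncard_eq]
  exact_mod_cast p.ncard_rootSet_le R

theorem hasDerivAt_log_add_eval (a : ℝ) (p : ℝ[X]) {x : ℝ} (hx : x ≠ 0) :
    HasDerivAt (fun y ↦ a * Real.log y + p.eval y)
      ((C a + X * derivative p).eval x / x) x := by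
  refine (((Real.hasDerivAt_log hx).const_mul a).add (p.hasDerivAt x)).congr_deriv ?_
  rw [eval_add, eval_C, eval_mul, eval_X]
  field_simp

theorem encard_pos_zeros_log_add_eval_le (a : ℝ) (p : ℝ[X]) :
    {x : ℝ | 0 < x ∧ a * Real.log x + p.eval x = 0}.encard ≤
      {x : ℝ | 0 < x ∧ (C a + X * derivative p).IsRoot x}.encard + 1 := by
  have hderiv {x : ℝ} (hx : 0 < x) := hasDerivAt_log_add_eval a p hx.ne'
  have hcont : ContinuousOn (fun x ↦ a * Real.log x + p.eval x) (Ioi 0) :=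
    fun x hx ↦ (hderiv hx).continuousAt.continuousWithinAt
  have hcrit : {x ∈ interior (Ioi 0) | deriv (fun y ↦ a * Real.log y + p.eval y) x = 0} =
      {x | 0 < x ∧ (C a + X * derivative p).IsRoot x} := by
    ext x
    rw [interior_Ioi]
    exact and_congr_right fun hx ↦ by
      rw [(hderiv hx).deriv, div_eq_zero_iff, or_iff_left (ne_of_gt hx), IsRoot.def]
  exact hcrit ▸ encard_fiber_le_encard_deriv_eq_zero_add_one ordConnected_Ioi hcont 0

theorem subsingleton_pos_roots_quadratic {R : Type*} [CommRing R] [LinearOrder R]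
    [IsStrictOrderedRing R] {a b c : R} (hne : C a * X ^ 2 + C b * X + C c ≠ 0) (hac : a * c ≤ 0) :
    {x : R | 0 < x ∧ (C a * X ^ 2 + C b * X + C c).IsRoot x}.Subsingleton := by
  rintro x ⟨hx, hx_root⟩ y ⟨hy, hy_root⟩
  simp only [IsRoot.def, eval_add, eval_mul, eval_pow, eval_C, eval_X] at hx_root hy_root
  by_contra hxy
  have hsum : a * (x + y) + b = 0 :=
    mul_left_cancel₀ (sub_ne_zero.mpr hxy) (by linear_combination hx_root - hy_root)
  have hprod : c = a * (x * y) := by linear_combination hx_root - x * hsum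
  have ha : a = 0 := by
    by_contra ha
    have hpos : 0 < a ^ 2 * (x * y) := by positivity
    exact hac.not_gt (by linear_combination hpos - a * hprod)
  have hb : b = 0 := by simpa [ha] using hsum
  have hc : c = 0 := by simpa [ha] using hprod
  exact hne (by simp [ha, hb, hc])

theorem quadratic_ne_zero {R : Type*} [Semiring R] {a b c : R} (h : a ≠ 0 ∨ b ≠ 0 ∨ c ≠ 0) :
    C a * X ^ 2 + C b * X + C c ≠ 0 := by
  contrapose! h
  have hcoeff (n : ℕ) : (C a * X ^ 2 + C b * X + C c).coeff n = 0 := by rw [h, coeff_zero]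
  exact ⟨by simpa using hcoeff 2, by simpa [coeff_X_pow] using hcoeff 1, by simpa using hcoeff 0⟩

theorem encard_pos_zeros_log_quadratic_le (a0 a1 a2 a3 : ℝ) :
    {x : ℝ | 0 < x ∧ a0 + a1 * Real.log x + a2 * x + a3 * x ^ 2 = 0}.encard ≤
      {x : ℝ | 0 < x ∧ (C (2 * a3) * X ^ 2 + C a2 * X + C a1).IsRoot x}.encard + 1 := by
  set p : ℝ[X] := C a3 * X ^ 2 + C a2 * X + C a0
  have heval (x : ℝ) :
      a0 + a1 * Real.log x + a2 * x + a3 * x ^ 2 = a1 * Real.log x + p.eval x := by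
    simp only [p, eval_add, eval_mul, eval_pow, eval_C, eval_X]
    ring
  have hderiv : C (2 * a3) * X ^ 2 + C a2 * X + C a1 = C a1 + X * derivative p := by
    simp only [p, derivative_add, derivative_mul, derivative_X_pow, derivative_C, derivative_X,
      C_mul, map_ofNat, Nat.cast_ofNat]
    ring
  simp only [heval, hderiv]
  exact encard_pos_zeros_log_add_eval_le a1 p

theorem zeros_of_log_quadratic_combination_general
    (a0 a1 a2 a3 : ℝ) (ha : a1 ≠ 0 ∨ a2 ≠ 0 ∨ a3 ≠ 0) :
    {x : ℝ | 0 < x ∧ a0 + a1 * Real.log x + a2 * x + a3 * x ^ 2 = 0}.encard ≤ 3 ∧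
    (a1 * a3 ≤ 0 →
      {x : ℝ | 0 < x ∧ a0 + a1 * Real.log x + a2 * x + a3 * x ^ 2 = 0}.encard ≤ 2) := by
  have hzeros := encard_pos_zeros_log_quadratic_le a0 a1 a2 a3
  set q : ℝ[X] := C (2 * a3) * X ^ 2 + C a2 * X + C a1
  have hq : q ≠ 0 := quadratic_ne_zero (by simpa [or_comm, or_left_comm] using ha)
  refine ⟨?_, fun ha13 ↦ ?_⟩
  · have hroots : {x : ℝ | 0 < x ∧ q.IsRoot x}.encard ≤ 2 := calc
      {x : ℝ | 0 < x ∧ q.IsRoot x}.encard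
      _ ≤ {x : ℝ | q.IsRoot x}.encard := encard_le_encard fun _ hx ↦ hx.2
      _ ≤ q.natDegree := encard_setOf_isRoot_le_natDegree hq
      _ ≤ 2 := mod_cast natDegree_quadratic_le
    exact hzeros.trans ((add_le_add_left hroots 1).trans_eq (by norm_num))
  · have hroots : {x : ℝ | 0 < x ∧ q.IsRoot x}.encard ≤ 1 :=
      encard_le_one_iff_subsingleton.mpr (subsingleton_pos_roots_quadratic hq (by linarith))
    exact hzeros.trans ((add_le_add_left hroots 1).trans_eq (by norm_num))

/-- **Variation-diminishing bound for the Descartes system `(1, log x, x, x²)`.**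
If `a₂ < 0 < a₃`, then `Δ(x) = a₀ + a₁ log x + a₂ x + a₃ x²` has at most three zeros
on `(0,∞)` when `a₁ > 0`, and at most two zeros when `a₁ ≤ 0`. -/
theorem zeros_of_log_quadratic_combination
    (a0 a1 a2 a3 : ℝ) (ha2 : a2 < 0) (ha3 : 0 < a3) :
    (0 < a1 →
      {x : ℝ | 0 < x ∧ a0 + a1 * Real.log x + a2 * x + a3 * x ^ 2 = 0}.encard ≤ 3) ∧
    (a1 ≤ 0 →
      {x : ℝ | 0 < x ∧ a0 + a1 * Real.log x + a2 * x + a3 * x ^ 2 = 0}.encard ≤ 2) := by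
  have general := zeros_of_log_quadratic_combination_general a0 a1 a2 a3 (.inr (.inl ha2.ne))
  exact ⟨fun _ ↦ general.1, fun ha1 ↦ general.2 (mul_nonpos_of_nonpos_of_nonneg ha1 ha3.le)⟩
end

section
/- For every choice of positive parameters c, λ, μ, T with μ < 2λ and every σ > 0, the double gamma density f_0 and the lognormal-model log-price density φ_σ cross at most six times; more precisely, the set { x ∈ ℝ : f_0(x) = φ_σ(x) } has at most six elements. -/
/-!
On a half-line, taking logarithms turns a crossing into a zero of `p log x + P(x)` with `P` a
quadratic polynomial. Its derivative times `x` is the quadratic `p + x P'(x)`, which has at most two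
zeros, so by Rolle's theorem there are at most three crossings. The reflection `x ↦ -x`
preserves both families of densities, so the other half-line contributes at most three more, and
the origin none.
-/

open MeasureTheory

/-- Risk-neutral log-price density of the Black–Scholes model with volatility `σ`:
normal with variance `σ²` and mean `−σ²/2`. -/
noncomputable def phiBS (σ x : ℝ) : ℝ :=
  (Real.sqrt (2 * Real.pi) * σ)⁻¹ * Real.exp (-(x / σ + σ / 2) ^ 2 / 2)

open Polynomial ProbabilityTheory
open scoped NNReal Pointwise

lemma encard_eq_const_le_encard_deriv_eq_zero_add_one {s : Set ℝ} [hs : s.OrdConnected]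
    {f f' : ℝ → ℝ} (hf : ∀ x ∈ s, HasDerivAt f (f' x) x) (c : ℝ) :
    {x ∈ s | f x = c}.encard ≤ {x ∈ s | f' x = 0}.encard + 1 := by
  obtain hinf | hfin := {x ∈ s | f' x = 0}.finite_or_infinite.symm
  · simp [hinf.encard_eq]
  refine ENat.forall_natCast_le_iff_le.mp fun n hn ↦ ?_
  obtain ⟨t, ht, htn⟩ := Set.exists_subset_encard_eq hn
  lift t to Finset ℝ using Set.finite_of_encard_eq_coe htn
  rw [← htn, Set.encard_coe_eq_coe_finsetCard, hfin.encard_eq_coe_toFinset_card]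
  norm_cast
  refine Finset.card_le_of_interleaved fun a ha b hb hab _ ↦ ?_
  obtain ⟨has, hfa⟩ := ht ha
  obtain ⟨hbs, hfb⟩ := ht hb
  have hsub : Set.Icc a b ⊆ s := hs.out has hbs
  obtain ⟨z, hz, hz0⟩ := exists_hasDerivAt_eq_zero hab
    (fun x hx ↦ (hf x (hsub hx)).continuousAt.continuousWithinAt) (hfa.trans hfb.symm)
    (fun x hx ↦ hf x (hsub (Set.Ioo_subset_Icc_self hx)))
  exact ⟨z, hfin.mem_toFinset.mpr ⟨hsub (Set.Ioo_subset_Icc_self hz), hz0⟩, hz⟩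

lemma encard_setOf_eval_eq_zero_le_natDegree {R : Type*} [CommRing R] [IsDomain R] {P : R[X]}
    (hP : P ≠ 0) : {x | P.eval x = 0}.encard ≤ P.natDegree := by
  classical
  have hroots : {x | P.eval x = 0} = P.roots.toFinset := by ext x; simp [hP]
  rw [hroots, Set.encard_coe_eq_coe_finsetCard]
  exact_mod_cast P.roots.toFinset_card_le.trans P.card_roots'

lemma natDegree_C_add_X_mul_derivative {R : Type*} [Semiring R] [IsAddTorsionFree R] (p : R)
    {P : R[X]} (hP : P.natDegree ≠ 0) : (C p + X * derivative P).natDegree = P.natDegree := by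
  nontriviality R
  have hP' : derivative P ≠ 0 := derivative_eq_zero.not.mpr hP
  rw [natDegree_C_add, natDegree_X_mul hP', natDegree_derivative]
  lia

lemma encard_pos_mul_log_add_eval_eq_le (p c : ℝ) {P : ℝ[X]} (hP : P.natDegree ≠ 0) :
    {x ∈ Set.Ioi 0 | p * Real.log x + P.eval x = c}.encard ≤ P.natDegree + 1 := by
  set Q : ℝ[X] := C p + X * derivative P with hQ
  have hQdeg : Q.natDegree = P.natDegree := natDegree_C_add_X_mul_derivative p hP
  have hQ0 : Q ≠ 0 := fun h ↦ hP (by rw [← hQdeg, h, natDegree_zero])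
  have hderiv (x : ℝ) (hx : x ∈ Set.Ioi 0) :
      HasDerivAt (fun x ↦ p * Real.log x + P.eval x) (Q.eval x / x) x := by
    have hx0 : x ≠ 0 := ne_of_gt hx
    refine (((Real.hasDerivAt_log hx0).const_mul p).add (P.hasDerivAt x)).congr_deriv ?_
    simp only [hQ, eval_add, eval_C, eval_mul, eval_X]
    field_simp
  have hsub : {x ∈ Set.Ioi 0 | Q.eval x / x = 0} ⊆ {x | Q.eval x = 0} := fun x hx ↦
    (div_eq_zero_iff.mp hx.2).resolve_right (ne_of_gt hx.1)
  calc {x ∈ Set.Ioi 0 | p * Real.log x + P.eval x = c}.encard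
    _ ≤ {x ∈ Set.Ioi 0 | Q.eval x / x = 0}.encard + 1 :=
      encard_eq_const_le_encard_deriv_eq_zero_add_one hderiv c
    _ ≤ {x | Q.eval x = 0}.encard + 1 := by gcongr
    _ ≤ P.natDegree + 1 := by grw [encard_setOf_eval_eq_zero_le_natDegree hQ0, hQdeg]

lemma encard_pos_rpow_mul_exp_eval_eq_le (K p : ℝ) {M : ℝ} (hM : M ≠ 0) {P : ℝ[X]}
    (hP : P.natDegree ≠ 0) :
    {x ∈ Set.Ioi 0 | K * x ^ p * Real.exp (P.eval x) = M}.encard ≤ P.natDegree + 1 := by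
  refine (Set.encard_le_encard ?_).trans
    (encard_pos_mul_log_add_eval_eq_le p (Real.log M - Real.log K) hP)
  rintro x ⟨hx, rfl⟩
  have hxp : x ^ p ≠ 0 := (Real.rpow_pos_of_pos hx p).ne'
  have hKxp : K * x ^ p ≠ 0 := left_ne_zero_of_mul hM
  have hK : K ≠ 0 := left_ne_zero_of_mul hKxp
  refine ⟨hx, ?_⟩
  rw [Real.log_mul hKxp (Real.exp_ne_zero _), Real.log_mul hK hxp, Real.log_rpow hx, Real.log_exp]
  ring

lemma encard_pos_rpow_mul_exp_eq_gaussianPDFReal_le (K p r m : ℝ) {v : ℝ≥0} (hv : v ≠ 0) :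
    {x ∈ Set.Ioi 0 | K * x ^ p * Real.exp (-r * x) = gaussianPDFReal m v x}.encard ≤ 3 := by
  have hv' : (v : ℝ) ≠ 0 := mod_cast hv
  set P : ℝ[X] := C (2 * v : ℝ)⁻¹ * X ^ 2 + C (-(m / v) - r) * X + C (m ^ 2 / (2 * v)) with hP
  have hPdeg : P.natDegree = 2 := natDegree_quadratic (by positivity)
  have hPeval (x : ℝ) : P.eval x = -r * x - -(x - m) ^ 2 / (2 * v) := by
    simp only [hP, eval_add, eval_mul, eval_C, eval_pow, eval_X]
    field
  have hM : (√(2 * Real.pi * v))⁻¹ ≠ 0 := by positivity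
  have hiff (x : ℝ) : K * x ^ p * Real.exp (-r * x) = gaussianPDFReal m v x ↔
      K * x ^ p * Real.exp (P.eval x) = (√(2 * Real.pi * v))⁻¹ := by
    rw [gaussianPDFReal, hPeval, Real.exp_sub, ← mul_div_assoc, div_eq_iff (Real.exp_ne_zero _)]
  simp only [hiff]
  calc {x ∈ Set.Ioi 0 | K * x ^ p * Real.exp (P.eval x) = (√(2 * Real.pi * v))⁻¹}.encard
    _ ≤ P.natDegree + 1 :=
      encard_pos_rpow_mul_exp_eval_eq_le K p hM (hPdeg ▸ two_ne_zero)
    _ = 3 := by rw [hPdeg]; norm_num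

lemma encard_le_encard_pos_add_encard_pos_neg {α : Type*} [AddGroup α] [LinearOrder α]
    [AddLeftMono α] {s : Set α} (hs : 0 ∉ s) :
    s.encard ≤ {x ∈ Set.Ioi 0 | x ∈ s}.encard + {x ∈ Set.Ioi 0 | -x ∈ s}.encard := by
  rw [← Set.encard_neg {x ∈ Set.Ioi 0 | -x ∈ s}]
  refine (Set.encard_le_encard fun x hx ↦ ?_).trans (Set.encard_union_le _ _)
  obtain hneg | hpos := (ne_of_mem_of_not_mem hx hs).lt_or_gt
  · exact .inr ⟨neg_pos.mpr hneg, by rwa [neg_neg]⟩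
  · exact .inl ⟨hpos, hx⟩

/-- The two-sided gamma density, without normalisation: shape `pᵢ + 1`, rate `rᵢ` and weight `Kᵢ`
on the negative (`i = 1`) and the positive (`i = 2`) half-line, and the value `0` at the origin. -/
noncomputable def twoSidedGamma (K₁ p₁ r₁ K₂ p₂ r₂ x : ℝ) : ℝ :=
  if x < 0 then K₁ * (-x) ^ p₁ * Real.exp (r₁ * x)
  else if 0 < x then K₂ * x ^ p₂ * Real.exp (-r₂ * x)
  else 0

section TwoSidedGamma

variable {K₁ p₁ r₁ K₂ p₂ r₂ : ℝ}

lemma twoSidedGamma_zero : twoSidedGamma K₁ p₁ r₁ K₂ p₂ r₂ 0 = 0 := by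
  simp [twoSidedGamma]

lemma twoSidedGamma_of_pos {x : ℝ} (hx : 0 < x) :
    twoSidedGamma K₁ p₁ r₁ K₂ p₂ r₂ x = K₂ * x ^ p₂ * Real.exp (-r₂ * x) := by
  simp [twoSidedGamma, hx, hx.not_gt]

lemma twoSidedGamma_neg_of_pos {x : ℝ} (hx : 0 < x) :
    twoSidedGamma K₁ p₁ r₁ K₂ p₂ r₂ (-x) = K₁ * x ^ p₁ * Real.exp (-r₁ * x) := by
  simp [twoSidedGamma, hx]

end TwoSidedGamma

lemma doubleGamma_eq_twoSidedGamma (c lam mu T : ℝ) :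
    doubleGamma c lam mu T =
      twoSidedGamma
        (mixA c lam mu T / (mixA c lam mu T + mixB c lam mu T) *
          (lamMinus lam mu ^ (c * T) / Real.Gamma (c * T))) (c * T - 1) (lamMinus lam mu)
        (mixB c lam mu T / (mixA c lam mu T + mixB c lam mu T) *
          (lamPlus lam mu ^ (c * T) / Real.Gamma (c * T))) (c * T - 1) (lamPlus lam mu) :=
  rfl

lemma gaussianPDFReal_neg (m : ℝ) (v : ℝ≥0) (x : ℝ) :
    gaussianPDFReal m v (-x) = gaussianPDFReal (-m) v x := by
  simp only [gaussianPDFReal]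
  ring_nf

lemma phiBS_eq_gaussianPDFReal {σ : ℝ} (hσ : 0 < σ) :
    phiBS σ = gaussianPDFReal (-(σ ^ 2 / 2)) (σ.toNNReal ^ 2) := by
  ext x
  have hsqrt : √(2 * Real.pi * σ ^ 2) = √(2 * Real.pi) * σ := by
    rw [Real.sqrt_mul (by positivity), Real.sqrt_sq hσ.le]
  have hexp : -(x / σ + σ / 2) ^ 2 / 2 = -(x - -(σ ^ 2 / 2)) ^ 2 / (2 * σ ^ 2) := by field
  rw [phiBS, gaussianPDFReal, NNReal.coe_pow, Real.coe_toNNReal σ hσ.le, hsqrt, hexp]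

theorem doubleGamma_normal_crossings_le_six_general
    (K₁ p₁ r₁ K₂ p₂ r₂ m : ℝ) {v : ℝ≥0} (hv : v ≠ 0) :
    {x | twoSidedGamma K₁ p₁ r₁ K₂ p₂ r₂ x = gaussianPDFReal m v x}.encard ≤ 6 := by
  set s := {x | twoSidedGamma K₁ p₁ r₁ K₂ p₂ r₂ x = gaussianPDFReal m v x}
  have hzero : 0 ∉ s := fun h ↦
    (gaussianPDFReal_pos m v 0 hv).ne (twoSidedGamma_zero.symm.trans h)
  have hpos : {x ∈ Set.Ioi 0 | x ∈ s}.encard ≤ 3 := by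
    refine le_trans (Set.encard_le_encard ?_)
      (encard_pos_rpow_mul_exp_eq_gaussianPDFReal_le K₂ p₂ r₂ m hv)
    rintro x ⟨hx, hxs⟩
    exact ⟨hx, (twoSidedGamma_of_pos hx).symm.trans hxs⟩
  have hneg : {x ∈ Set.Ioi 0 | -x ∈ s}.encard ≤ 3 := by
    refine le_trans (Set.encard_le_encard ?_)
      (encard_pos_rpow_mul_exp_eq_gaussianPDFReal_le K₁ p₁ r₁ (-m) hv)
    rintro x ⟨hx, hxs⟩
    exact ⟨hx, (twoSidedGamma_neg_of_pos hx).symm.trans (hxs.trans (gaussianPDFReal_neg m v x))⟩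
  calc s.encard
    _ ≤ {x ∈ Set.Ioi 0 | x ∈ s}.encard + {x ∈ Set.Ioi 0 | -x ∈ s}.encard :=
      encard_le_encard_pos_add_encard_pos_neg hzero
    _ ≤ 3 + 3 := add_le_add hpos hneg
    _ = 6 := by norm_num

/-- **The double gamma density crosses a lognormal-model log-price density at most six
times:** the set `{x : f₀(x) = φ_σ(x)}` has at most six elements. -/
theorem doubleGamma_normal_crossings_le_six
    (c lam mu T σ : ℝ)
    (hc : 0 < c) (hlam : 0 < lam) (hmu : 0 < mu) (hT : 0 < T)
    (hmu2lam : mu < 2 * lam) (hσ : 0 < σ) :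
    {x : ℝ | doubleGamma c lam mu T x = phiBS σ x}.encard ≤ 6 := by
  rw [doubleGamma_eq_twoSidedGamma, phiBS_eq_gaussianPDFReal hσ]
  exact doubleGamma_normal_crossings_le_six_general _ _ _ _ _ _ _ (by positivity)
end
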